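/- arXiv:2204.01473 — 2 statements merged into one kernel-verified Lean document; each statement's English description precedes it below -/
import Mathlib

section
/- Let m be a positive half-integer, s a half-integer, and p a nonpositive integer such that mp ∈ ℤ. Then for all τ in the upper half-plane and z1, z2 ∈ ℂ (with all denominators nonzero): Φ^{[m,s]}(τ, z1, z2+pτ, 0) = e^{−2πimpz1} Φ^{[m,s]}(τ, z1, z2, 0) + e^{−2πimpz1} Σ_{k=mp}^{−1} e^{πi(s+k)(z1−z2)} q^{−(s+k)²/(4m)} [θ_{s+k,m} − θ_{−(s+k),m}](τ, z1+z2). -/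
open Complex

noncomputable section

namespace Wakimoto

/-- `qpow τ x = e^{2πiτx}`, i.e. `q^x` where `q = e^{2πiτ}`. -/
def qpow (τ x : ℂ) : ℂ := Complex.exp (2 * Real.pi * Complex.I * τ * x)

/-- `e2 z = e^{2πiz}`. -/
def e2 (z : ℂ) : ℂ := Complex.exp (2 * Real.pi * Complex.I * z)

/-- The mock theta function `Φ^{[m,s]}_1`. -/
def Phi1 (m s : ℂ) (τ z1 z2 t : ℂ) : ℂ :=
  Complex.exp (-(2 * Real.pi * Complex.I) * m * t) *
    ∑' j : ℤ,
      Complex.exp (2 * Real.pi * Complex.I * (m * (j : ℂ) * (z1 + z2) + s * z1)) *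
          qpow τ (m * (j : ℂ) ^ 2 + s * (j : ℂ)) /
        (1 - e2 z1 * qpow τ (j : ℂ))

/-- The mock theta function `Φ^{[m,s]}_2`. -/
def Phi2 (m s : ℂ) (τ z1 z2 t : ℂ) : ℂ :=
  Complex.exp (-(2 * Real.pi * Complex.I) * m * t) *
    ∑' j : ℤ,
      Complex.exp (-(2 * Real.pi * Complex.I) * (m * (j : ℂ) * (z1 + z2) + s * z2)) *
          qpow τ (m * (j : ℂ) ^ 2 + s * (j : ℂ)) /
        (1 - e2 (-z2) * qpow τ (j : ℂ))

/-- `Φ^{[m,s]} = Φ^{[m,s]}_1 - Φ^{[m,s]}_2`. -/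
def Phi (m s : ℂ) (τ z1 z2 t : ℂ) : ℂ :=
  Phi1 m s τ z1 z2 t - Phi2 m s τ z1 z2 t

/-- Jacobi's theta function `θ_{k,m}`. -/
def jTheta (k m : ℂ) (τ z : ℂ) : ℂ :=
  ∑' j : ℤ,
    Complex.exp (2 * Real.pi * Complex.I * (m * ((j : ℂ) + k / (2 * m)) * z)) *
      qpow τ (m * ((j : ℂ) + k / (2 * m)) ^ 2)

/-- The signed theta function `θ^{(-)}_{k,m}`. -/
def jThetaM (k m : ℂ) (τ z : ℂ) : ℂ :=
  ∑' j : ℤ,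
    (-1 : ℂ) ^ j *
      Complex.exp (2 * Real.pi * Complex.I * (m * ((j : ℂ) + k / (2 * m)) * z)) *
      qpow τ (m * ((j : ℂ) + k / (2 * m)) ^ 2)

/-- The Dedekind eta function. -/
def eta (τ : ℂ) : ℂ := qpow τ (1 / 24) * ∏' n : ℕ, (1 - qpow τ ((n : ℂ) + 1))

/-- The Mumford theta functions `ϑ_{ab}`. -/
def mumford (a b : ℕ) (τ z : ℂ) : ℂ :=
  ∑' n : ℤ,
    Complex.exp (Real.pi * Complex.I * τ * ((n : ℂ) + (a : ℂ) / 2) ^ 2 +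
      2 * Real.pi * Complex.I * ((n : ℂ) + (a : ℂ) / 2) * (z + (b : ℂ) / 2))

/-- `z` lies in the lattice `ℤ + ℤτ`. -/
def InLattice (τ z : ℂ) : Prop := ∃ a b : ℤ, z = (a : ℂ) + (b : ℂ) * τ

/-- Numerator term. -/
def GG (m s τ w Z : ℂ) (j : ℤ) : ℂ :=
  Complex.exp (2 * Real.pi * Complex.I * (m * j * Z + s * w + (m * j ^ 2 + s * j) * τ))

/-- Appell-Lerch term. -/
def FF (m s τ w Z : ℂ) (j : ℤ) : ℂ :=
  GG m s τ w Z j / (1 - Complex.exp (2 * Real.pi * Complex.I * (w + j * τ)))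

lemma GG_summable (m : ℝ) (hm : 0 < m) (s τ w Z : ℂ) (hτ : 0 < τ.im) :
    Summable (GG m s τ w Z) := by
  have h := (summable_jacobiTheta₂_term_iff (m * Z + s * τ) (2 * m * τ)).2 (by
    have : (2 * (m : ℂ) * τ).im = 2 * m * τ.im := by simp
    rw [this]; positivity)
  refine (h.mul_left (Complex.exp (2 * Real.pi * Complex.I * (s * w)))).congr ?_
  intro j
  rw [jacobiTheta₂_term, ← Complex.exp_add, GG]
  congr 1
  ring

lemma den_ne (τ w : ℂ) (hw : ¬ InLattice τ w) (j : ℤ) :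
    1 - Complex.exp (2 * Real.pi * Complex.I * (w + j * τ)) ≠ 0 := by
  intro h
  have h1 : Complex.exp (2 * Real.pi * Complex.I * (w + j * τ)) = 1 := (sub_eq_zero.1 h).symm
  rw [Complex.exp_eq_one_iff] at h1
  obtain ⟨n, hn⟩ := h1
  apply hw
  refine ⟨n, -j, ?_⟩
  have h2 : w + j * τ = n := by
    apply mul_left_cancel₀ Complex.two_pi_I_ne_zero
    rw [hn]; ring
  push_cast
  linear_combination h2

lemma den_bound (τ w : ℂ) (hτ : 0 < τ.im) :
    ∀ᶠ j : ℤ in Filter.cofinite,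
      (1 / 2 : ℝ) ≤ ‖1 - Complex.exp (2 * Real.pi * Complex.I * (w + j * τ))‖ := by
  have hn : ∀ j : ℤ, ‖Complex.exp (2 * Real.pi * Complex.I * (w + j * τ))‖
      = Real.exp (-(2 * Real.pi * (w.im + j * τ.im))) := by
    intro j
    rw [Complex.norm_exp]
    congr 1
    simp
  have hc : 0 < 2 * Real.pi * τ.im := by positivity
  rw [Int.cofinite_eq, Filter.eventually_sup]
  constructor
  · have ht : Filter.Tendsto (fun j : ℤ => Real.exp (-(2 * Real.pi * (w.im + j * τ.im))))
        Filter.atBot Filter.atTop := by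
      apply Real.tendsto_exp_atTop.comp
      have h1 : Filter.Tendsto (fun j : ℤ => (j : ℝ)) Filter.atBot Filter.atBot :=
        tendsto_intCast_atBot_iff.2 Filter.tendsto_id
      have h2 := Filter.tendsto_atTop_add_const_left _ (-(2 * Real.pi * w.im))
        (Filter.tendsto_neg_atBot_atTop.comp (h1.const_mul_atBot hc))
      refine h2.congr ?_
      intro j
      simp only [Function.comp]
      ring
    filter_upwards [ht.eventually_ge_atTop 2] with j hj
    rw [← hn] at hj
    have := norm_sub_norm_le (Complex.exp (2 * Real.pi * Complex.I * (w + j * τ))) 1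
    rw [norm_sub_rev, norm_one] at this
    linarith
  · have ht : Filter.Tendsto (fun j : ℤ => Real.exp (-(2 * Real.pi * (w.im + j * τ.im))))
        Filter.atTop (nhds 0) := by
      apply Real.tendsto_exp_atBot.comp
      have h1 : Filter.Tendsto (fun j : ℤ => (j : ℝ)) Filter.atTop Filter.atTop :=
        tendsto_intCast_atTop_iff.2 Filter.tendsto_id
      have h2 := Filter.tendsto_atBot_add_const_left _ (-(2 * Real.pi * w.im))
        (Filter.tendsto_neg_atTop_atBot.comp (h1.const_mul_atTop hc))
      refine h2.congr ?_
      intro j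
      simp only [Function.comp]
      ring
    filter_upwards [ht.eventually_le_const (show (0 : ℝ) < 1 / 2 by norm_num)] with j hj
    rw [← hn] at hj
    have := norm_sub_norm_le 1 (Complex.exp (2 * Real.pi * Complex.I * (w + j * τ)))
    rw [norm_one] at this
    linarith

lemma FF_summable (m : ℝ) (hm : 0 < m) (s τ w Z : ℂ) (hτ : 0 < τ.im) :
    Summable (FF m s τ w Z) := by
  refine Summable.of_norm_bounded_eventually
    ((GG_summable m hm s τ w Z hτ).norm.mul_left 2) ?_
  filter_upwards [den_bound τ w hτ] with j hj
  rw [FF, norm_div, div_le_iff₀ (by linarith)]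
  nlinarith [norm_nonneg (GG m s τ w Z j)]

lemma FF_step (m s τ w Z : ℂ) (hw : ¬ InLattice τ w) (j : ℤ) :
    FF m s τ w Z j - FF m (s + 1) τ w Z j = GG m s τ w Z j := by
  have h := den_ne τ w hw j
  have h2 : GG m (s + 1) τ w Z j
      = GG m s τ w Z j * Complex.exp (2 * Real.pi * Complex.I * (w + j * τ)) := by
    rw [GG, GG, ← Complex.exp_add]
    congr 1
    ring
  rw [FF, FF, h2]
  field_simp

lemma tsum_step (m : ℝ) (hm : 0 < m) (s τ w Z : ℂ) (hτ : 0 < τ.im) (hw : ¬ InLattice τ w) :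
    ∑' j, FF m s τ w Z j = ∑' j, FF m (s + 1) τ w Z j + ∑' j, GG m s τ w Z j := by
  rw [← (FF_summable m hm (s + 1) τ w Z hτ).tsum_add (GG_summable m hm s τ w Z hτ)]
  refine tsum_congr fun j => ?_
  rw [← FF_step m s τ w Z hw j]
  ring

lemma tsum_steps (m : ℝ) (hm : 0 < m) (s τ w Z : ℂ) (hτ : 0 < τ.im) (hw : ¬ InLattice τ w)
    (n : ℕ) :
    ∑' j, FF m (s + ((-(n : ℤ) : ℤ) : ℂ)) τ w Z j = ∑' j, FF m s τ w Z j
      + ∑ k ∈ Finset.Icc (-(n : ℤ)) (-1), ∑' j, GG m (s + (k : ℂ)) τ w Z j := by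
  induction n with
  | zero => simp
  | succ n ih =>
    have hI : Finset.Icc (-((n + 1 : ℕ) : ℤ)) (-1)
        = insert (-((n + 1 : ℕ) : ℤ)) (Finset.Icc (-(n : ℤ)) (-1)) := by
      ext k
      simp only [Finset.mem_Icc, Finset.mem_insert]
      push_cast
      omega
    rw [hI, Finset.sum_insert (by simp), tsum_step m hm _ τ w Z hτ hw]
    have hs : s + ((-((n + 1 : ℕ) : ℤ) : ℤ) : ℂ) + 1 = s + ((-(n : ℤ) : ℤ) : ℂ) := by
      push_cast; ring
    rw [hs, ih]
    ring

lemma Phi1_eq (m s τ z1 z2 : ℂ) :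
    Phi1 m s τ z1 z2 0 = ∑' j, FF m s τ z1 (z1 + z2) j := by
  simp only [Phi1, FF, GG, qpow, e2, mul_zero, Complex.exp_zero, one_mul]
  refine tsum_congr fun j => ?_
  rw [← Complex.exp_add, ← Complex.exp_add]
  congr 2 <;> [skip; congr 1] <;> ring_nf

lemma Phi2_eq (m s τ z1 z2 : ℂ) :
    Phi2 m s τ z1 z2 0 = ∑' j, FF m s τ (-z2) (-(z1 + z2)) j := by
  simp only [Phi2, FF, GG, qpow, e2, mul_zero, Complex.exp_zero, one_mul]
  refine tsum_congr fun j => ?_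
  rw [← Complex.exp_add, ← Complex.exp_add]
  congr 2 <;> [skip; congr 1] <;> ring_nf

lemma theta1 (m k τ z1 z2 : ℂ) (hm : m ≠ 0) :
    Complex.exp (Real.pi * Complex.I * k * (z1 - z2)) * qpow τ (-(k ^ 2) / (4 * m)) *
      jTheta k m τ (z1 + z2) = ∑' j, GG m k τ z1 (z1 + z2) j := by
  rw [jTheta, ← tsum_mul_left]
  refine tsum_congr fun j => ?_
  simp only [GG, qpow, ← Complex.exp_add]
  congr 1
  field_simp
  ring

lemma theta2 (m k τ z1 z2 : ℂ) (hm : m ≠ 0) :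
    Complex.exp (Real.pi * Complex.I * k * (z1 - z2)) * qpow τ (-(k ^ 2) / (4 * m)) *
      jTheta (-k) m τ (z1 + z2) = ∑' j, GG m k τ (-z2) (-(z1 + z2)) j := by
  rw [jTheta, ← tsum_mul_left, ← (Equiv.neg ℤ).tsum_eq]
  refine tsum_congr fun j => ?_
  simp only [GG, qpow, ← Complex.exp_add, Equiv.neg_apply]
  congr 1
  push_cast
  field_simp
  ring

lemma thetaD (m k τ z1 z2 : ℂ) (hm : m ≠ 0) :
    Complex.exp (Real.pi * Complex.I * k * (z1 - z2)) * qpow τ (-(k ^ 2) / (4 * m)) *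
      (jTheta k m τ (z1 + z2) - jTheta (-k) m τ (z1 + z2))
      = ∑' j, GG m k τ z1 (z1 + z2) j - ∑' j, GG m k τ (-z2) (-(z1 + z2)) j := by
  rw [← theta1 m k τ z1 z2 hm, ← theta2 m k τ z1 z2 hm, mul_sub]

lemma shift1 (m s τ z1 z2 : ℂ) (p N : ℤ) (hN : m * p = N) :
    Phi1 m s τ z1 (z2 + p * τ) 0 = Complex.exp (-(2 * Real.pi * Complex.I) * m * p * z1) *
      ∑' j, FF m (s + N) τ z1 (z1 + z2) j := by
  rw [Phi1_eq, ← tsum_mul_left]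
  refine tsum_congr fun j => ?_
  rw [FF, FF, GG, GG, ← mul_div_assoc, ← Complex.exp_add]
  congr 2
  rw [← hN]
  ring

lemma shift2 (m s τ z1 z2 : ℂ) (p N : ℤ) (hN : m * p = N) :
    Phi2 m s τ z1 (z2 + p * τ) 0 = Complex.exp (-(2 * Real.pi * Complex.I) * m * p * z1) *
      ∑' j, FF m (s + N) τ (-z2) (-(z1 + z2)) j := by
  rw [Phi2_eq, ← tsum_mul_left, ← (Equiv.addRight p).tsum_eq]
  refine tsum_congr fun j => ?_
  rw [FF, FF, GG, GG, ← mul_div_assoc, ← Complex.exp_add, Equiv.coe_addRight]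
  push_cast
  rw [← hN]
  congr 2
  · ring
  · congr 1
    ring

theorem statement9 (m s : ℝ) (hm : ∃ n : ℕ, 0 < n ∧ m = n / 2)
    (hs : ∃ a : ℤ, s = a / 2) (p : ℤ) (hp : p ≤ 0) (N : ℤ)
    (hN : m * (p : ℝ) = (N : ℝ))
    (τ : ℂ) (hτ : 0 < τ.im) (z1 z2 : ℂ)
    (hz1 : ¬ InLattice τ z1) (hz2 : ¬ InLattice τ z2) :
    Phi (m : ℂ) (s : ℂ) τ z1 (z2 + (p : ℂ) * τ) 0 =
      Complex.exp (-(2 * Real.pi * Complex.I) * (m : ℂ) * (p : ℂ) * z1) *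
          Phi (m : ℂ) (s : ℂ) τ z1 z2 0 +
        Complex.exp (-(2 * Real.pi * Complex.I) * (m : ℂ) * (p : ℂ) * z1) *
          ∑ k ∈ Finset.Icc N (-1),
            Complex.exp (Real.pi * Complex.I * ((s : ℂ) + (k : ℂ)) * (z1 - z2)) *
              qpow τ (-(((s : ℂ) + (k : ℂ)) ^ 2) / (4 * (m : ℂ))) *
              (jTheta ((s : ℂ) + (k : ℂ)) (m : ℂ) τ (z1 + z2) -
                jTheta (-((s : ℂ) + (k : ℂ))) (m : ℂ) τ (z1 + z2)) := by
  have hm0 : 0 < m := by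
    obtain ⟨n, hn, rfl⟩ := hm
    have : (0 : ℝ) < n := by exact_mod_cast hn
    positivity
  have hmc : (m : ℂ) ≠ 0 := by exact_mod_cast hm0.ne'
  have hNc : (m : ℂ) * p = N := by exact_mod_cast congrArg (fun x : ℝ => (x : ℂ)) hN
  have hN0 : N ≤ 0 := by
    have h1 : (p : ℝ) ≤ 0 := by exact_mod_cast hp
    have h2 : (N : ℝ) ≤ 0 := by
      rw [← hN]; exact mul_nonpos_of_nonneg_of_nonpos hm0.le h1
    exact_mod_cast h2
  have hz2' : ¬ InLattice τ (-z2) := by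
    rintro ⟨a, b, h⟩
    refine hz2 ⟨-a, -b, ?_⟩
    push_cast
    linear_combination -h
  obtain ⟨n, hn⟩ : ∃ n : ℕ, N = -(n : ℤ) := ⟨N.natAbs, by omega⟩
  have e1 := tsum_steps m hm0 s τ z1 (z1 + z2) hτ hz1 n
  have e2 := tsum_steps m hm0 s τ (-z2) (-(z1 + z2)) hτ hz2' n
  rw [← hn] at e1 e2
  simp only [thetaD _ _ _ _ _ hmc, Finset.sum_sub_distrib]
  rw [Phi, Phi, shift1 _ _ _ _ _ p N hNc, shift2 _ _ _ _ _ p N hNc, e1, e2, Phi1_eq, Phi2_eq]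
  ring

end Wakimoto
end
end

section
/- Let m be a positive half-integer. For τ in the upper half-plane and z1, z2, z3 ∈ ℂ such that none of z1, z2, z3, z1−z2−z3 lies in ℤ + ℤτ, the following identity holds: θ_{0,m+1}(τ, ((z1−z2)+m(z1+z3))/(m+1)) · Φ^{[m,0]}(τ, z1, −z3, 0) − θ_{0,m+1}(τ, ((z1−z2)+m(z1−2z2−z3))/(m+1)) · Φ^{[m,0]}(τ, z2, z1−z2−z3, 0) + Σ_{j>0} Σ_{k=1}^{2mj} q^{(m+1)j²} q^{−k²/(4m)} P^{[m]}_{j,k}(z1,z2,z3) [θ_{k,m} − θ_{−k,m}](τ, z1−z3) = i θ_{0,m+1}(τ, ((z1+z2)+m(z1−z3))/(m+1)) · η(τ)³ ϑ_{11}(τ, z1−z2) / (ϑ_{11}(τ, z1) ϑ_{11}(τ, z2)) + i θ_{0,m+1}(τ, ((z1−z2−2z3)+m(z1−z3))/(m+1)) · η(τ)³ ϑ_{11}(τ, z1−z2) / (ϑ_{11}(τ, z3) ϑ_{11}(τ, z1−z2−z3)), where P^{[m]}_{j,k}(z1,z2,z3) := e^{2πij(z1−z2)} e^{πi(2mj−k)(z1−2z2−z3)}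 + e^{−2πij(z1−z2)} e^{−πi(2mj−k)(z1−2z2−z3)} − e^{2πij(z1−z2)} e^{πi(2mj−k)(z1+z3)} − e^{−2πij(z1−z2)} e^{−πi(2mj−k)(z1+z3)}, and in the double sum j runs over the positive integers and k over the integers 1, …, 2mj. -/
open Complex

noncomputable section

namespace Wakimoto

def poch (q a : ℂ) (k : ℕ) : ℂ := ∏ i ∈ Finset.range k, (1 - a * q ^ i)
def pinf (q a : ℂ) : ℂ := ∏' i : ℕ, (1 - a * q ^ i)

lemma poch_summable {q : ℂ} (hq : ‖q‖ < 1) (a : ℂ) : Summable (fun i : ℕ => ‖-(a * q ^ i)‖) := by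
  simp only [norm_neg, norm_mul, norm_pow]
  exact (summable_geometric_of_lt_one (norm_nonneg _) hq).mul_left _

lemma poch_tendsto {q : ℂ} (hq : ‖q‖ < 1) (a : ℂ) :
    Filter.Tendsto (poch q a) Filter.atTop (nhds (pinf q a)) := by
  have := (multipliable_one_add_of_summable (poch_summable hq a)).hasProd.tendsto_prod_nat
  simp only [← sub_eq_add_neg] at this
  exact this

lemma pinf_ne_zero {q : ℂ} (hq : ‖q‖ < 1) {a : ℂ} (h : ∀ i : ℕ, 1 - a * q ^ i ≠ 0) :
    pinf q a ≠ 0 := by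
  have := tprod_one_add_ne_zero_of_summable (f := fun i : ℕ => -(a * q ^ i))
    (by intro i; simpa only [← sub_eq_add_neg] using h i) (poch_summable hq a)
  simp only [← sub_eq_add_neg] at this
  exact this

lemma pinf_eq_zero {q : ℂ} (hq : ‖q‖ < 1) {a : ℂ} (i : ℕ) (h : 1 - a * q ^ i = 0) :
    pinf q a = 0 := by
  refine tendsto_nhds_unique (poch_tendsto hq a) (tendsto_const_nhds.congr' ?_)
  filter_upwards [Filter.eventually_gt_atTop i] with k hk
  exact (Finset.prod_eq_zero (Finset.mem_range.2 hk) h).symm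

lemma poch_succ' (q a : ℂ) (k : ℕ) : poch q a (k + 1) = (1 - a) * poch q (a * q) k := by
  unfold poch
  rw [Finset.prod_range_succ', mul_comm]
  simp only [pow_zero, mul_one]
  congr 1
  exact Finset.prod_congr rfl fun i _ => by ring

lemma poch_succ (q a : ℂ) (k : ℕ) : poch q a (k + 1) = poch q a k * (1 - a * q ^ k) := by
  unfold poch
  rw [Finset.prod_range_succ]

lemma pinf_succ {q : ℂ} (hq : ‖q‖ < 1) (a : ℂ) : pinf q a = (1 - a) * pinf q (a * q) := by
  refine tendsto_nhds_unique ((Filter.tendsto_add_atTop_iff_nat 1).2 (poch_tendsto hq a)) ?_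
  simp only [poch_succ']
  exact (poch_tendsto hq _).const_mul _

lemma poch_ne_zero {q a : ℂ} (h : ∀ i : ℕ, 1 - a * q ^ i ≠ 0) (k : ℕ) : poch q a k ≠ 0 :=
  Finset.prod_ne_zero_iff.2 fun i _ => h i

lemma poch_inv_bdd {q : ℂ} (hq : ‖q‖ < 1) {a : ℂ} (h : ∀ i : ℕ, 1 - a * q ^ i ≠ 0) :
    ∃ C : ℝ, ∀ k, ‖(poch q a k)⁻¹‖ ≤ C := by
  have := ((poch_tendsto hq a).inv₀ (pinf_ne_zero hq h))
  obtain ⟨C, hC⟩ := (Metric.isBounded_range_of_tendsto _ this).exists_norm_le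
  exact ⟨C, fun k => hC _ ⟨k, rfl⟩⟩

lemma poch_bdd {q : ℂ} (hq : ‖q‖ < 1) (a : ℂ) :
    ∃ C : ℝ, ∀ k, ‖poch q a k‖ ≤ C := by
  obtain ⟨C, hC⟩ := (Metric.isBounded_range_of_tendsto _ (poch_tendsto hq a)).exists_norm_le
  exact ⟨C, fun k => hC _ ⟨k, rfl⟩⟩

/-- Gaussian binomials. -/
def gb (q : ℂ) : ℕ → ℕ → ℂ
  | _, 0 => 1
  | 0, _ + 1 => 0
  | n + 1, k + 1 => q ^ (k + 1) * gb q n (k + 1) + gb q n k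

lemma gb_zero_right (q : ℂ) (n : ℕ) : gb q n 0 = 1 := by cases n <;> rfl

lemma gb_eq_zero (q : ℂ) (n k : ℕ) (h : n < k) : gb q n k = 0 := by
  induction n generalizing k with
  | zero => cases k with
    | zero => omega
    | succ k => rfl
  | succ n ih => cases k with
    | zero => omega
    | succ k =>
      rw [gb, ih _ (by omega), ih _ (by omega)]; ring

lemma gb_self (q : ℂ) (n : ℕ) : gb q n n = 1 := by
  induction n with
  | zero => rfl
  | succ n ih => rw [gb, ih, gb_eq_zero _ _ _ (by omega)]; ring

lemma gb_formula (q : ℂ) (s : ℕ) : ∀ A B : ℕ, A + B = s →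
    gb q (A + B) A * poch q q A * poch q q B = poch q q (A + B) := by
  induction s with
  | zero =>
    intro A B h
    obtain rfl : A = 0 := by omega
    obtain rfl : B = 0 := by omega
    simp [gb, poch]
  | succ s ih =>
    intro A B h
    cases A with
    | zero => simp [gb_zero_right, poch]
    | succ A => cases B with
      | zero => simp [gb_self, poch]
      | succ B =>
        have e1 := ih (A + 1) B (by omega)
        have e2 := ih A (B + 1) (by omega)
        have : A + 1 + (B + 1) = (A + 1 + B) + 1 := by ring
        rw [this, gb, poch_succ _ _ (A + 1 + B), ← e1]
        rw [show A + (B + 1) = A + 1 + B by ring] at e2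
        have e3 : gb q (A + 1 + B) A * poch q q (A + 1) * poch q q (B + 1) =
          (1 - q * q ^ A) * (gb q (A + 1 + B) (A + 1) * poch q q (A + 1) * poch q q B) := by
          rw [e1, ← e2, poch_succ q q A]; ring
        rw [add_mul, add_mul, e3, poch_succ q q B]
        ring

lemma qbinom (h : ℂ) (n : ℕ) (x : ℂ) : poch (h ^ 2) x n =
    ∑ k ∈ Finset.range (n + 1), gb (h ^ 2) n k * h ^ (k * (k - 1)) * (-x) ^ k := by
  induction n generalizing x with
  | zero => simp [poch, gb]
  | succ n ih =>
    rw [poch_succ', ih, sub_mul, one_mul]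
    conv_rhs => rw [Finset.sum_range_succ']
    have hg : ∀ k : ℕ, gb (h ^ 2) (n + 1) (k + 1) * h ^ ((k + 1) * (k + 1 - 1)) * (-x) ^ (k + 1) =
      gb (h ^ 2) n (k + 1) * h ^ ((k + 1) * (k + 1 - 1)) * (-(x * h ^ 2)) ^ (k + 1)
       - x * (gb (h ^ 2) n k * h ^ (k * (k - 1)) * (-(x * h ^ 2)) ^ k) := by
      intro k
      have : h ^ ((k + 1) * (k + 1 - 1)) = h ^ (k * (k - 1)) * (h ^ 2) ^ k := by
        rw [← pow_mul, ← pow_add]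
        congr 1
        cases k with
        | zero => rfl
        | succ k => simp only [Nat.add_sub_cancel]; ring
      rw [gb, this]
      have : (-(x * h ^ 2)) = (-x) * h ^ 2 := by ring
      rw [this, mul_pow, mul_pow]
      ring
    simp only [hg]
    rw [Finset.sum_sub_distrib, ← Finset.mul_sum]
    rw [Finset.sum_range_succ (fun k => gb (h ^ 2) n (k + 1) * h ^ ((k + 1) * (k + 1 - 1)) * (-(x * h ^ 2)) ^ (k + 1)) n]
    rw [gb_eq_zero _ n (n + 1) (by omega)]
    rw [Finset.sum_range_succ' _ n]
    simp [gb_zero_right]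
    ring

/-- Lagrange partial fractions. -/
lemma partial_frac {ι : Type*} [DecidableEq ι] (S : Finset ι) (a : ι → ℂ) (ha : Set.InjOn a S)
    (h0 : ∀ i ∈ S, a i ≠ 0) (h1 : ∀ i ∈ S, 1 - a i ≠ 0) (K : ℕ) (hK : K < S.card) :
    ∏ i ∈ S, (1 - a i)⁻¹ =
      ∑ i ∈ S, ((a i)⁻¹ ^ K * (1 - a i)⁻¹ * ∏ j ∈ S.erase i, (1 - a j / a i)⁻¹) := by
  have hv : Set.InjOn (fun i => (a i)⁻¹) S := fun i hi j hj h => ha hi hj (inv_injective h)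
  have e := Lagrange.eq_interpolate_of_eval_eq (s := S) (v := fun i => (a i)⁻¹)
    (f := (Polynomial.X ^ K : Polynomial ℂ)) (fun i => (a i)⁻¹ ^ K) hv
    (by rw [Polynomial.degree_X_pow]; exact_mod_cast hK) (by intro i hi; simp)
  have e1 := congrArg (Polynomial.eval 1) e
  have hn1 : ∀ i ∈ S, (1 : ℂ) ≠ (a i)⁻¹ := fun i hi h => h1 i hi (by
    have := h0 i hi; field_simp at h; rw [h]; ring)
  rw [Lagrange.eval_interpolate_not_at_node _ hn1, Lagrange.eval_nodal] at e1
  simp only [Polynomial.eval_pow, Polynomial.eval_X, one_pow] at e1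
  have hprod : ∏ i ∈ S, (-(a i)) ≠ 0 := Finset.prod_ne_zero_iff.2 fun i hi => neg_ne_zero.2 (h0 i hi)
  have e2 : ∏ i ∈ S, (1 - (a i)⁻¹) = (∏ i ∈ S, (-(a i)))⁻¹ * ∏ i ∈ S, (1 - a i) := by
    rw [← Finset.prod_inv_distrib, ← Finset.prod_mul_distrib]
    refine Finset.prod_congr rfl fun i hi => ?_
    have := h0 i hi
    field_simp
    ring
  have e3 : ∀ i ∈ S, Lagrange.nodalWeight S (fun i => (a i)⁻¹) i * (1 - (a i)⁻¹)⁻¹ * (a i)⁻¹ ^ K =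
     (∏ i ∈ S, (-(a i))) * ((a i)⁻¹ ^ K * (1 - a i)⁻¹ * ∏ j ∈ S.erase i, (1 - a j / a i)⁻¹) := by
    intro i hi
    have : Lagrange.nodalWeight S (fun i => (a i)⁻¹) i =
       (∏ j ∈ S.erase i, (-(a j))) * ∏ j ∈ S.erase i, (1 - a j / a i)⁻¹ := by
      rw [Lagrange.nodalWeight, ← Finset.prod_mul_distrib]
      refine Finset.prod_congr rfl fun j hj => ?_
      have := h0 i hi
      have := h0 j (Finset.mem_of_mem_erase hj)
      have h2 : a i - a j ≠ 0 := sub_ne_zero.2 fun h =>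
        Finset.ne_of_mem_erase hj (ha hi (Finset.mem_of_mem_erase hj) h).symm
      have h3 : a j - a i ≠ 0 := by rw [← neg_sub]; exact neg_ne_zero.2 h2
      have e4 : (a i)⁻¹ - (a j)⁻¹ = (a j - a i) / (a i * a j) := by field_simp
      have e5 : 1 - a j / a i = (a i - a j) / a i := by field_simp
      rw [e4, e5, inv_div, inv_div]
      field_simp
      ring
    rw [this, ← Finset.mul_prod_erase S _ hi]
    have := h0 i hi
    have := h1 i hi
    have e4 : 1 - (a i)⁻¹ = (1 - a i) / (- a i) := by field_simp; ring
    rw [e4, inv_div]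
    field_simp
  rw [Finset.sum_congr rfl e3, ← Finset.mul_sum, e2] at e1
  have hp1 : ∏ i ∈ S, (1 - a i) ≠ 0 := Finset.prod_ne_zero_iff.2 h1
  rw [Finset.prod_inv_distrib]
  field_simp at e1 ⊢
  exact e1

def Wq (q : ℂ) (i : ℕ) : ℂ := ∏ l ∈ Finset.range i, q ^ (l + 1)

lemma Wq_sq (q : ℂ) (i : ℕ) : Wq q i ^ 2 = q ^ (i * (i + 1)) := by
  induction i with
  | zero => simp [Wq]
  | succ i ih =>
    have : Wq q (i + 1) = Wq q i * q ^ (i + 1) := by simp [Wq, Finset.prod_range_succ]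
    rw [this, mul_pow, ih]; ring

lemma Wq_ne {q : ℂ} (hq : q ≠ 0) (i : ℕ) : Wq q i ≠ 0 :=
  Finset.prod_ne_zero_iff.2 fun _ _ => pow_ne_zero _ hq

lemma prod_low {q : ℂ} (hq : q ≠ 0) {c : ℂ} (hc : c ≠ 0) (i : ℕ) :
    ∏ j ∈ Finset.range i, (1 - c * q ^ j / q ^ i) = poch q (q / c) i * (-c) ^ i / Wq q i := by
  rw [← Finset.prod_range_reflect]
  have hc' : (-c) ^ i = ∏ _l ∈ Finset.range i, (-c) := by simp
  rw [poch, Wq, hc',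
    ← Finset.prod_mul_distrib, ← Finset.prod_div_distrib]
  refine Finset.prod_congr rfl fun j hj => ?_
  rw [Finset.mem_range] at hj
  obtain ⟨k, rfl⟩ : ∃ k, i = j + 1 + k := ⟨i - (j + 1), by omega⟩
  have e : j + 1 + k - 1 - j = k := by omega
  rw [e]
  have := pow_ne_zero k hq
  have := pow_ne_zero j hq
  rw [pow_add]
  field_simp
  ring

lemma prod_all {q : ℂ} (hq : q ≠ 0) {c : ℂ} (hc : c ≠ 0) (i B : ℕ) :
    ∏ j ∈ Finset.range (i + B), (1 - c * q ^ j / q ^ i) =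
      poch q c B * (poch q (q / c) i * (-c) ^ i / Wq q i) := by
  rw [Finset.prod_range_add, prod_low hq hc, mul_comm, poch]
  congr 1
  refine Finset.prod_congr rfl fun j hj => ?_
  have := pow_ne_zero i hq
  rw [pow_add]
  field_simp

lemma prod_erase {q : ℂ} (hq : q ≠ 0) (i B : ℕ) :
    ∏ j ∈ (Finset.range (i + B + 1)).erase i, (1 - q ^ j / q ^ i) =
      poch q q B * (poch q q i * (-1) ^ i / Wq q i) := by
  have h1 : (Finset.range (i + B + 1)).erase i =
      Finset.range i ∪ (Finset.range B).image (fun j => i + 1 + j) := by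
    ext j
    simp only [Finset.mem_erase, Finset.mem_range, Finset.mem_union, Finset.mem_image]
    constructor
    · rintro ⟨h, h'⟩
      rcases lt_or_gt_of_ne h with h | h
      · exact Or.inl h
      · exact Or.inr ⟨j - (i + 1), by omega, by omega⟩
    · rintro (h | ⟨k, hk, rfl⟩) <;> constructor <;> omega
  rw [h1, Finset.prod_union, Finset.prod_image]
  · have := prod_low hq (one_ne_zero) i
    simp only [one_mul, div_one] at this
    rw [this, mul_comm, poch]
    congr 1
    refine Finset.prod_congr rfl fun j hj => ?_
    have := pow_ne_zero i hq
    rw [pow_add, pow_add]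
    field_simp
  · intro a _ b _ h; simpa using h
  · rw [Finset.disjoint_left]
    intro a ha hb
    simp only [Finset.mem_range, Finset.mem_image] at ha hb
    obtain ⟨k, _, rfl⟩ := hb
    omega

/-- the `n`-th term of the finite partial-fraction expansion, `A = N+n`, `B = N-n` -/
def pfT (q X Y : ℂ) (n : ℤ) (A B : ℕ) : ℂ :=
  X⁻¹ * ((X / Y) ^ n * q ^ (n ^ 2) / (1 - X * q ^ n)) *
    ((poch q q B)⁻¹ * (poch q q A)⁻¹ * (poch q (Y / X) (B + 1))⁻¹ * (poch q (q / (Y / X)) A)⁻¹)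

lemma pf_mono {q X Y : ℂ} (hq : q ≠ 0) (hX : X ≠ 0) (hY : Y ≠ 0) (n : ℤ) (N A : ℕ)
    (h : n = A - N) :
    ((X / q ^ N * q ^ A)⁻¹) ^ (2 * N + 1) * q ^ (A * (A + 1)) / (Y / X) ^ A *
      (X ^ N * Y ^ N / q ^ (N * (N + 1))) = X⁻¹ * ((X / Y) ^ n * q ^ (n ^ 2)) := by
  obtain ⟨a, rfl⟩ : ∃ a, X = exp a := ⟨log X, (exp_log hX).symm⟩
  obtain ⟨b, rfl⟩ : ∃ a, Y = exp a := ⟨log Y, (exp_log hY).symm⟩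
  obtain ⟨t, rfl⟩ : ∃ a, q = exp a := ⟨log q, (exp_log hq).symm⟩
  simp only [← exp_nat_mul, ← exp_int_mul, ← exp_add, ← exp_neg, ← exp_sub]
  congr 1
  subst h
  push_cast
  ring

lemma pf_term {q X Y : ℂ} (hq : q ≠ 0) (hX : X ≠ 0) (hY : Y ≠ 0) (n : ℤ) (N A B : ℕ)
    (h : n = A - N) (hB : A + B = 2 * N) :
    ((X / q ^ N * q ^ A)⁻¹) ^ (2 * N + 1) * (1 - X / q ^ N * q ^ A)⁻¹ *
      ((∏ j ∈ (Finset.range (2 * N + 1)).erase A, (1 - q ^ j / q ^ A)⁻¹) *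
       (∏ j ∈ Finset.range (2 * N + 1), (1 - (Y / X) * q ^ j / q ^ A)⁻¹)) *
      (X ^ N * Y ^ N / q ^ (N * (N + 1))) = pfT q X Y n A B := by
  rw [Finset.prod_inv_distrib, Finset.prod_inv_distrib]
  have e1 := prod_erase hq A B
  have e2 := prod_all hq (div_ne_zero hY hX) A (B + 1)
  rw [hB] at e1
  rw [← add_assoc, hB] at e2
  rw [e1, e2, pfT]
  have e3 : X / q ^ N * q ^ A = X * q ^ n := by
    rw [h, zpow_sub₀ hq, zpow_natCast, zpow_natCast]; ring
  have e4 := pf_mono hq hX hY n N A h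
  rw [e3] at e4 ⊢
  rw [mul_div_assoc, mul_inv, mul_inv, mul_inv, mul_inv]
  have e5 : ((-1) ^ A / Wq q A)⁻¹ * ((-(Y / X)) ^ A / Wq q A)⁻¹ = q ^ (A * (A + 1)) / (Y / X) ^ A := by
    rw [← Wq_sq, ← mul_inv, div_mul_div_comm, ← mul_pow, inv_div]
    ring
  rw [mul_div_assoc, mul_inv (poch q (q / (Y / X)) A)]
  calc _ = (((X * q ^ n)⁻¹) ^ (2 * N + 1) * (((-1) ^ A / Wq q A)⁻¹ * ((-(Y / X)) ^ A / Wq q A)⁻¹) *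
      (X ^ N * Y ^ N / q ^ (N * (N + 1)))) * (1 - X * q ^ n)⁻¹ *
      ((poch q q B)⁻¹ * (poch q q A)⁻¹ * (poch q (Y / X) (B + 1))⁻¹ * (poch q (q / (Y / X)) A)⁻¹) := by ring
    _ = _ := by
      rw [mul_div_assoc] at e4
      rw [e5, e4]; ring

lemma fin_id {q X Y : ℂ} (hq : q ≠ 0) (hq1 : ‖q‖ < 1) (hX : X ≠ 0) (hY : Y ≠ 0)
    (h1 : ∀ n : ℤ, X * q ^ n ≠ 1) (h2 : ∀ n : ℤ, Y * q ^ n ≠ 1)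
    (h3 : ∀ n : ℤ, Y / X ≠ q ^ n) (N : ℕ) :
    (poch q X (N + 1) * poch q (q / X) N * (poch q Y (N + 1) * poch q (q / Y) N))⁻¹ =
    ∑ i ∈ Finset.range (2 * N + 1),
      (pfT q X Y ((i : ℤ) - N) i (2 * N - i) + pfT q Y X ((i : ℤ) - N) i (2 * N - i)) := by
  have hinj : ∀ i j : ℕ, q ^ i = q ^ j → i = j := by
    have hqn : 0 < ‖q‖ := norm_pos_iff.2 hq
    intro i j h
    have := congrArg norm h
    rw [norm_pow, norm_pow] at this
    exact (pow_right_injective₀ hqn hq1.ne) this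
  have hqN := pow_ne_zero N hq
  have hz : ∀ (x : ℂ) (j : ℕ), x / q ^ N * q ^ j = x * q ^ ((j : ℤ) - N) := by
    intro x j
    rw [zpow_sub₀ hq, zpow_natCast, zpow_natCast]; ring
  have key := partial_frac ((Finset.range (2 * N + 1)).disjSum (Finset.range (2 * N + 1)))
    (Sum.elim (fun j => X / q ^ N * q ^ j) (fun j => Y / q ^ N * q ^ j)) ?_ ?_ ?_ (2 * N + 1) ?_
  · have er1 : ∀ i, (((Finset.range (2 * N + 1)).disjSum (Finset.range (2 * N + 1))).erase (Sum.inl i)) =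
      ((Finset.range (2 * N + 1)).erase i).disjSum (Finset.range (2 * N + 1)) := by
      intro i; ext (j | j) <;> simp
    have er2 : ∀ i, (((Finset.range (2 * N + 1)).disjSum (Finset.range (2 * N + 1))).erase (Sum.inr i)) =
      ((Finset.range (2 * N + 1))).disjSum ((Finset.range (2 * N + 1)).erase i) := by
      intro i; ext (j | j) <;> simp
    rw [Finset.prod_disjSum, Finset.sum_disjSum] at key
    simp only [er1, er2, Finset.prod_disjSum, Sum.elim_inl, Sum.elim_inr] at key
    rw [Finset.prod_inv_distrib, Finset.prod_inv_distrib] at key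
    have a1 := prod_all hq hX N (N + 1)
    have a2 := prod_all hq hY N (N + 1)
    rw [show N + (N + 1) = 2 * N + 1 by ring] at a1 a2
    simp only [div_mul_eq_mul_div] at key
    rw [a1, a2] at key
    have key2 := congrArg (fun z => z * (X ^ N * Y ^ N / q ^ (N * (N + 1)))) key
    simp only [add_mul, Finset.sum_mul] at key2
    rw [Finset.sum_add_distrib]
    refine Eq.trans ?_ (key2.trans ?_)
    · rw [← Wq_sq, neg_pow X, neg_pow Y]
      have := Wq_ne hq N
      have hX' := pow_ne_zero N hX
      have hY' := pow_ne_zero N hY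
      have hs : ((-1 : ℂ)) ^ N * (-1) ^ N = 1 := by rw [← mul_pow]; simp
      rw [← mul_inv, show ∀ a b c d w x y s : ℂ, (a * (b * (s * x) / w) * (c * (d * (s * y) / w)))⁻¹ *
        (x * y / w ^ 2) = (a * b * (c * d))⁻¹ * ((s * s)⁻¹ * (x * y / w ^ 2) * (x * y / w ^ 2)⁻¹) from by
          intros; simp only [mul_inv, div_eq_mul_inv, inv_inv]; ring]
      rw [hs, inv_one, one_mul, mul_inv_cancel₀ (div_ne_zero (mul_ne_zero hX' hY') (pow_ne_zero 2 this)), mul_one]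
    · congr 1
      · refine Finset.sum_congr rfl fun i hi => ?_
        rw [Finset.mem_range] at hi
        have := pf_term hq hX hY ((i : ℤ) - N) N i (2 * N - i) rfl (by omega)
        rw [← this]
        have hqi := pow_ne_zero i hq
        congr 2
        · congr 2 
          · ring
          · ring
        · congr 1
          · refine Finset.prod_congr rfl fun j hj => ?_
            congr 2
            field_simp
          · refine Finset.prod_congr rfl fun j hj => ?_
            congr 2
            field_simp
      · refine Finset.sum_congr rfl fun i hi => ?_
        rw [Finset.mem_range] at hi
        have := pf_term hq hY hX ((i : ℤ) - N) N i (2 * N - i) rfl (by omega)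
        rw [← this]
        have hqi := pow_ne_zero i hq
        rw [mul_comm (X ^ N)]
        congr 2
        · congr 2 
          · ring
          · ring
        · rw [mul_comm]
          congr 1
          · refine Finset.prod_congr rfl fun j hj => ?_
            congr 2
            field_simp
          · refine Finset.prod_congr rfl fun j hj => ?_
            congr 2
            field_simp
  · have hcross : ∀ i j : ℕ, X / q ^ N * q ^ i ≠ Y / q ^ N * q ^ j := by
      intro i j h
      apply h3 ((i : ℤ) - j)
      rw [zpow_sub₀ hq, zpow_natCast, zpow_natCast]
      have := pow_ne_zero j hq
      field_simp at h ⊢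
      exact h.symm
    rintro (i | i) hi (j | j) hj h
    · simp only [Sum.elim_inl] at h
      rw [hinj i j (mul_left_cancel₀ (div_ne_zero hX hqN) h)]
    · exact absurd h (hcross i j)
    · exact absurd h.symm (hcross j i)
    · simp only [Sum.elim_inr] at h
      rw [hinj i j (mul_left_cancel₀ (div_ne_zero hY hqN) h)]
  · rintro (i | i) _
    · exact mul_ne_zero (div_ne_zero hX hqN) (pow_ne_zero _ hq)
    · exact mul_ne_zero (div_ne_zero hY hqN) (pow_ne_zero _ hq)
  · rintro (i | i) _
    · rw [Sum.elim_inl, hz]; exact sub_ne_zero.2 (h1 _).symm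
    · rw [Sum.elim_inr, hz]; exact sub_ne_zero.2 (h2 _).symm
  · rw [Finset.card_disjSum, Finset.card_range]; omega

lemma gauss_exp_summable {w : ℂ} (hw : 0 < w.im) (z : ℂ) :
    Summable (fun n : ℤ => ‖exp (2 * Real.pi * I * n * z + Real.pi * I * n ^ 2 * w)‖) :=
  ((summable_jacobiTheta₂_term_iff z w).2 hw).norm

lemma gauss_summable {q X : ℂ} (hq : q ≠ 0) (hq1 : ‖q‖ < 1) (hX : X ≠ 0) :
    Summable (fun n : ℤ => ‖X ^ n * q ^ (n ^ 2)‖) := by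
  have hpi : (Real.pi : ℂ) ≠ 0 := by exact_mod_cast Real.pi_ne_zero
  have hz : exp (2 * Real.pi * I * (log X / (2 * Real.pi * I))) = X := by
    rw [mul_div_cancel₀ _ (by simp [hpi]), exp_log hX]
  have hw : exp (Real.pi * I * (log q / (Real.pi * I))) = q := by
    rw [mul_div_cancel₀ _ (by simp [hpi]), exp_log hq]
  set z := log X / (2 * Real.pi * I)
  set w := log q / (Real.pi * I)
  have him : 0 < w.im := by
    rw [← hw, norm_exp] at hq1
    have : (Real.pi * I * w).re = - (Real.pi * w.im) := by simp
    rw [this, Real.exp_lt_one_iff] at hq1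
    have := Real.pi_pos
    by_contra hc
    nlinarith
  refine (gauss_exp_summable him z).congr fun n => ?_
  rw [exp_add, ← hz, ← hw, ← exp_int_mul, ← exp_int_mul]
  congr 3
  · ring
  · push_cast; ring

lemma inv_bdd {q X : ℂ} (hq : q ≠ 0) (hq1 : ‖q‖ < 1) (hX : X ≠ 0) :
    ∃ C : ℝ, ∀ n : ℤ, ‖(1 - X * q ^ n)⁻¹‖ ≤ C := by
  have hqn : 0 < ‖q‖ := norm_pos_iff.2 hq
  have t1 : Filter.Tendsto (fun n : ℕ => (1 - X * q ^ n)⁻¹) Filter.atTop (nhds 1) := by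
    have := (tendsto_pow_atTop_nhds_zero_of_norm_lt_one hq1).const_mul X
    have := (this.const_sub 1).inv₀ (by simp)
    simpa using this
  have t2 : Filter.Tendsto (fun n : ℕ => (1 - X / q ^ n)⁻¹) Filter.atTop (nhds 0) := by
    have h0 := (tendsto_pow_atTop_nhds_zero_of_norm_lt_one hq1)
    have h1 : Filter.Tendsto (fun n : ℕ => q ^ n * (q ^ n - X)⁻¹) Filter.atTop (nhds (0 * (0 - X)⁻¹)) :=
      h0.mul ((h0.sub_const X).inv₀ (by simpa using hX))
    rw [zero_mul] at h1
    refine h1.congr fun n => ?_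
    have := pow_ne_zero n hq
    rw [show 1 - X / q ^ n = (q ^ n - X) / q ^ n by field_simp, inv_div, div_eq_mul_inv]
  obtain ⟨C1, h1⟩ := (Metric.isBounded_range_of_tendsto _ t1).exists_norm_le
  obtain ⟨C2, h2⟩ := (Metric.isBounded_range_of_tendsto _ t2).exists_norm_le
  refine ⟨max C1 C2, fun n => ?_⟩
  obtain ⟨k, rfl | rfl⟩ := n.eq_nat_or_neg
  · refine le_trans ?_ (le_max_left _ _)
    rw [zpow_natCast]
    exact h1 _ ⟨k, rfl⟩
  · refine le_trans ?_ (le_max_right _ _)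
    rw [zpow_neg, zpow_natCast, ← div_eq_mul_inv]
    exact h2 _ ⟨k, rfl⟩

lemma appell_summable {q X Y : ℂ} (hq : q ≠ 0) (hq1 : ‖q‖ < 1) (hX : X ≠ 0) (hY : Y ≠ 0) :
    Summable (fun n : ℤ => ‖Y ^ n * q ^ (n ^ 2) / (1 - X * q ^ n)‖) := by
  obtain ⟨C, hC⟩ := inv_bdd hq hq1 hX
  refine ((gauss_summable hq hq1 hY).mul_right C).of_nonneg_of_le (fun _ => norm_nonneg _) fun n => ?_
  rw [div_eq_mul_inv, norm_mul]
  exact mul_le_mul_of_nonneg_left (hC n) (norm_nonneg _)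

lemma tannery {f : ℤ → ℂ} (hf : Summable fun n => ‖f n‖) (c : ℕ → ℕ → ℂ) (C : ℝ) (l : ℂ)
    (hb : ∀ A B, ‖c A B‖ ≤ C)
    (hl : Filter.Tendsto (fun p : ℕ × ℕ => c p.1 p.2) (Filter.atTop ×ˢ Filter.atTop) (nhds l)) :
    Filter.Tendsto (fun N : ℕ => ∑ i ∈ Finset.range (2 * N + 1), f ((i : ℤ) - N) * c i (2 * N - i))
      Filter.atTop (nhds ((∑' n, f n) * l)) := by
  have hsum : ∀ N : ℕ, ∑ i ∈ Finset.range (2 * N + 1), f ((i : ℤ) - N) * c i (2 * N - i) =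
      ∑' n : ℤ, if n ∈ Finset.Icc (-(N : ℤ)) N then f n * c ((N : ℤ) + n).toNat ((N : ℤ) - n).toNat else 0 := by
    intro N
    rw [tsum_eq_sum (s := Finset.Icc (-(N : ℤ)) N) (by intro b hb; rw [if_neg hb])]
    refine Finset.sum_nbij' (fun i => (i : ℤ) - N) (fun n => ((N : ℤ) + n).toNat) ?_ ?_ ?_ ?_ ?_
    · intro i hi; simp only [Finset.mem_range, Finset.mem_Icc] at *; omega
    · intro i hi; simp only [Finset.mem_range, Finset.mem_Icc] at *; omega
    · intro i hi; simp only [Finset.mem_range, Finset.mem_Icc] at *; omega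
    · intro i hi; simp only [Finset.mem_range, Finset.mem_Icc] at *; omega
    · intro i hi
      simp only [Finset.mem_range] at hi
      rw [if_pos (by rw [Finset.mem_Icc]; omega)]
      congr 2 <;> omega
  simp only [hsum]
  rw [← tsum_mul_right]
  have hC : 0 ≤ C := (norm_nonneg _).trans (hb 0 0)
  refine tendsto_tsum_of_dominated_convergence (bound := fun n => ‖f n‖ * C) (hf.mul_right C) ?_ ?_
  · intro n
    have t : Filter.Tendsto (fun N : ℕ => (((N : ℤ) + n).toNat, ((N : ℤ) - n).toNat)) Filter.atTop
        (Filter.atTop ×ˢ Filter.atTop) := by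
      refine Filter.Tendsto.prodMk ?_ ?_
      · refine Filter.tendsto_atTop.2 fun b => ?_
        filter_upwards [Filter.eventually_ge_atTop (b + n.natAbs)] with N hN
        omega
      · refine Filter.tendsto_atTop.2 fun b => ?_
        filter_upwards [Filter.eventually_ge_atTop (b + n.natAbs)] with N hN
        omega
    refine Filter.Tendsto.congr' ?_ ((hl.comp t).const_mul (f n))
    filter_upwards [Filter.eventually_ge_atTop n.natAbs] with N hN
    rw [if_pos (by rw [Finset.mem_Icc]; omega)]
    rfl
  · refine Filter.Eventually.of_forall fun N n => ?_
    split_ifs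
    · rw [norm_mul]; exact mul_le_mul_of_nonneg_left (hb _ _) (norm_nonneg _)
    · rw [norm_zero]; positivity

def br (q X : ℂ) : ℂ := pinf q X * pinf q (q / X)

lemma br_inv {q X : ℂ} (hq1 : ‖q‖ < 1) (hX : X ≠ 0) : br q X⁻¹ = -X⁻¹ * br q X := by
  unfold br
  rw [pinf_succ hq1 X⁻¹, pinf_succ hq1 X, div_inv_eq_mul, mul_comm q X, inv_mul_eq_div]
  field_simp
  ring

lemma nz1 {q X : ℂ} (h : ∀ n : ℤ, X * q ^ n ≠ 1) (i : ℕ) : 1 - X * q ^ i ≠ 0 := by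
  have := h i
  rw [zpow_natCast] at this
  exact sub_ne_zero.2 this.symm

lemma nz2 {q X : ℂ} (hq : q ≠ 0) (hX : X ≠ 0) (h : ∀ n : ℤ, X * q ^ n ≠ 1) (i : ℕ) :
    1 - q / X * q ^ i ≠ 0 := by
  intro e
  apply h (-(i + 1))
  rw [zpow_neg]
  norm_cast
  have := pow_ne_zero (i + 1) hq
  field_simp at e ⊢
  rw [pow_succ]
  linear_combination e

lemma nzq {q : ℂ} (hq1 : ‖q‖ < 1) (i : ℕ) : 1 - q * q ^ i ≠ 0 := by
  intro e
  have : q ^ (i + 1) = 1 := by rw [pow_succ]; linear_combination -e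
  have h2 := congrArg norm this
  rw [norm_pow, norm_one] at h2
  exact absurd h2 (pow_lt_one₀ (norm_nonneg _) hq1 (by omega)).ne

lemma br_ne {q X : ℂ} (hq : q ≠ 0) (hq1 : ‖q‖ < 1) (hX : X ≠ 0) (h : ∀ n : ℤ, X * q ^ n ≠ 1) :
    br q X ≠ 0 :=
  mul_ne_zero (pinf_ne_zero hq1 (nz1 h)) (pinf_ne_zero hq1 (nz2 hq hX h))

lemma br_zero {q : ℂ} (hq : q ≠ 0) (hq1 : ‖q‖ < 1) (n : ℤ) : br q (q ^ n) = 0 := by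
  obtain ⟨k, rfl | rfl⟩ := n.eq_nat_or_neg
  · cases k with
    | zero => exact mul_eq_zero_of_left (pinf_eq_zero hq1 0 (by simp)) _
    | succ k =>
      refine mul_eq_zero_of_right _ (pinf_eq_zero hq1 k ?_)
      rw [zpow_natCast]
      have := pow_ne_zero k hq
      rw [pow_succ]
      field_simp
      ring
  · refine mul_eq_zero_of_left (pinf_eq_zero hq1 k ?_) _
    rw [zpow_neg, zpow_natCast, inv_mul_cancel₀ (pow_ne_zero k hq), sub_self]

lemma pf_lim {q X Y : ℂ} (hq : q ≠ 0) (hq1 : ‖q‖ < 1) (hX : X ≠ 0) (hY : Y ≠ 0)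
    (h3 : ∀ n : ℤ, Y / X * q ^ n ≠ 1) :
    Filter.Tendsto (fun N : ℕ => ∑ i ∈ Finset.range (2 * N + 1), pfT q X Y ((i : ℤ) - N) i (2 * N - i))
      Filter.atTop (nhds (X⁻¹ * (∑' n : ℤ, (X / Y) ^ n * q ^ (n ^ 2) / (1 - X * q ^ n)) *
        ((pinf q q)⁻¹ * (pinf q q)⁻¹ * (pinf q (Y / X))⁻¹ * (pinf q (q / (Y / X)))⁻¹))) := by
  have hc := div_ne_zero hY hX
  obtain ⟨C1, hC1⟩ := poch_inv_bdd hq1 (nzq hq1)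
  obtain ⟨C2, hC2⟩ := poch_inv_bdd hq1 (nz1 h3)
  obtain ⟨C3, hC3⟩ := poch_inv_bdd hq1 (nz2 hq hc h3)
  rw [← tsum_mul_left]
  refine tannery (f := fun n : ℤ => X⁻¹ * ((X / Y) ^ n * q ^ (n ^ 2) / (1 - X * q ^ n))) ?_
    (fun A B => ((poch q q B)⁻¹ * (poch q q A)⁻¹ * (poch q (Y / X) (B + 1))⁻¹ * (poch q (q / (Y / X)) A)⁻¹))
    (C1 * C1 * C2 * C3) _ ?_ ?_
  · simp only [norm_mul X⁻¹]
    exact (appell_summable hq hq1 hX (div_ne_zero hX hY)).mul_left _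
  · intro A B
    have p1 := (norm_nonneg _).trans (hC1 0)
    have p2 := (norm_nonneg _).trans (hC2 0)
    rw [norm_mul, norm_mul, norm_mul]
    gcongr
    · exact hC1 _
    · exact hC1 _
    · exact hC2 _
    · exact hC3 _
  · have a1 := (poch_tendsto hq1 q).inv₀ (pinf_ne_zero hq1 (nzq hq1))
    have a2 := ((Filter.tendsto_add_atTop_iff_nat 1).2 (poch_tendsto hq1 (Y / X))).inv₀ (pinf_ne_zero hq1 (nz1 h3))
    have a3 := (poch_tendsto hq1 (q / (Y / X))).inv₀ (pinf_ne_zero hq1 (nz2 hq hc h3))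
    exact (((a1.comp Filter.tendsto_snd).mul (a1.comp Filter.tendsto_fst)).mul
      (a2.comp Filter.tendsto_snd)).mul (a3.comp Filter.tendsto_fst)

/-- The key product formula. -/
lemma kron_main {q X Y : ℂ} (hq : q ≠ 0) (hq1 : ‖q‖ < 1) (hX : X ≠ 0) (hY : Y ≠ 0)
    (h1 : ∀ n : ℤ, X * q ^ n ≠ 1) (h2 : ∀ n : ℤ, Y * q ^ n ≠ 1)
    (h3 : ∀ n : ℤ, Y / X ≠ q ^ n) :
    (∑' n : ℤ, (X / Y) ^ n * q ^ (n ^ 2) / (1 - X * q ^ n)) -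
    (∑' n : ℤ, (Y / X) ^ n * q ^ (n ^ 2) / (1 - Y * q ^ n)) =
      -Y * pinf q q ^ 2 * br q (X / Y) / (br q X * br q Y) := by
  have hc := div_ne_zero hY hX
  have h3' : ∀ n : ℤ, Y / X * q ^ n ≠ 1 := by
    intro n h
    apply h3 (-n)
    rw [zpow_neg]
    exact eq_inv_of_mul_eq_one_left h
  have h4' : ∀ n : ℤ, X / Y * q ^ n ≠ 1 := by
    intro n h
    apply h3 n
    rw [← inv_div]
    exact inv_eq_of_mul_eq_one_right h
  have l1 := (pf_lim hq hq1 hX hY h3').add (pf_lim hq hq1 hY hX h4')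
  simp only [← Finset.sum_add_distrib, ← fin_id hq hq1 hX hY h1 h2 h3] at l1
  have l2 : Filter.Tendsto (fun N => (poch q X (N + 1) * poch q (q / X) N * (poch q Y (N + 1) * poch q (q / Y) N))⁻¹)
      Filter.atTop (nhds (br q X * br q Y)⁻¹) := by
    refine Filter.Tendsto.inv₀ ?_ (mul_ne_zero (br_ne hq hq1 hX h1) (br_ne hq hq1 hY h2))
    exact (((Filter.tendsto_add_atTop_iff_nat 1).2 (poch_tendsto hq1 _)).mul (poch_tendsto hq1 _)).mul
      (((Filter.tendsto_add_atTop_iff_nat 1).2 (poch_tendsto hq1 _)).mul (poch_tendsto hq1 _))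
  have e := tendsto_nhds_unique l1 l2
  have hpq := pinf_ne_zero hq1 (nzq hq1)
  have hb1 := br_ne hq hq1 hX h1
  have hb2 := br_ne hq hq1 hY h2
  have hb4 := br_ne hq hq1 (div_ne_zero hX hY) h4'
  have hbi := br_inv hq1 (div_ne_zero hX hY)
  rw [inv_div] at hbi
  set S1 := ∑' n : ℤ, (X / Y) ^ n * q ^ (n ^ 2) / (1 - X * q ^ n)
  set S2 := ∑' n : ℤ, (Y / X) ^ n * q ^ (n ^ 2) / (1 - Y * q ^ n)
  have e' : (X⁻¹ * S1 * (br q (Y / X))⁻¹ + Y⁻¹ * S2 * (br q (X / Y))⁻¹) = pinf q q ^ 2 * (br q X * br q Y)⁻¹ := by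
    rw [← e]
    unfold br
    simp only [mul_inv]
    field_simp
  rw [hbi] at e'
  generalize br q (X / Y) = b at *
  field_simp at e' ⊢
  linear_combination -e'

lemma kron {q X Y : ℂ} (hq : q ≠ 0) (hq1 : ‖q‖ < 1) (hX : X ≠ 0) (hY : Y ≠ 0)
    (h1 : ∀ n : ℤ, X * q ^ n ≠ 1) (h2 : ∀ n : ℤ, Y * q ^ n ≠ 1) :
    (∑' n : ℤ, (X / Y) ^ n * q ^ (n ^ 2) / (1 - X * q ^ n)) -
    (∑' n : ℤ, (Y / X) ^ n * q ^ (n ^ 2) / (1 - Y * q ^ n)) =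
      -Y * pinf q q ^ 2 * br q (X / Y) / (br q X * br q Y) := by
  by_cases h3 : ∀ n : ℤ, Y / X ≠ q ^ n
  · exact kron_main hq hq1 hX hY h1 h2 h3
  · push Not at h3
    obtain ⟨b, hb⟩ := h3
    have hb' : X / Y = q ^ (-b) := by rw [zpow_neg, ← hb, inv_div]
    rw [hb', br_zero hq hq1, mul_zero, zero_div, sub_eq_zero, hb]
    rw [← (Equiv.addRight b).tsum_eq]
    refine tsum_congr fun n => ?_
    have hY' : Y = X * q ^ b := by rw [← hb]; field_simp
    simp only [Equiv.coe_addRight]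
    rw [hY', mul_assoc X, ← zpow_add₀ hq, add_comm b n, ← zpow_mul, ← zpow_add₀ hq, ← zpow_mul, ← zpow_add₀ hq]
    congr 2
    ring

lemma Wq_h (h : ℂ) (N : ℕ) : Wq (h ^ 2) N = h ^ (N * (N + 1)) := by
  induction N with
  | zero => simp [Wq]
  | succ i ih =>
    have : Wq (h ^ 2) (i + 1) = Wq (h ^ 2) i * (h ^ 2) ^ (i + 1) := by simp [Wq, Finset.prod_range_succ]
    rw [this, ih]; ring

/-- Jacobi triple product. -/
lemma triple {h X : ℂ} (hh : h ≠ 0) (hh1 : ‖h‖ < 1) (hX : X ≠ 0) :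
    ∑' n : ℤ, h ^ (n * (n - 1)) * (-X) ^ n = pinf (h ^ 2) (h ^ 2) * br (h ^ 2) X := by
  have hq : h ^ 2 ≠ 0 := pow_ne_zero 2 hh
  have hq1 : ‖h ^ 2‖ < 1 := by rw [norm_pow]; exact pow_lt_one₀ (norm_nonneg _) hh1 (by norm_num)
  have hpq := pinf_ne_zero hq1 (nzq hq1)
  have hfin : ∀ N : ℕ, poch (h ^ 2) X N * poch (h ^ 2) (h ^ 2 / X) N = poch (h ^ 2) (h ^ 2) (2 * N) *
      ∑ i ∈ Finset.range (2 * N + 1), (h ^ (((i : ℤ) - N) * (((i : ℤ) - N) - 1)) * (-X) ^ ((i : ℤ) - N)) *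
        ((poch (h ^ 2) (h ^ 2) i)⁻¹ * (poch (h ^ 2) (h ^ 2) (2 * N - i))⁻¹) := by
    intro N
    have a1 := prod_all hq hX N N
    have a2 := qbinom h (2 * N) (X / (h ^ 2) ^ N)
    rw [poch] at a2
    simp only [div_mul_eq_mul_div] at a2
    rw [show N + N = 2 * N by ring, a2, Wq_h] at a1
    have hN := pow_ne_zero (N * (N + 1)) hh
    have hXN := pow_ne_zero N (neg_ne_zero.2 hX)
    have a3 : poch (h ^ 2) X N * poch (h ^ 2) (h ^ 2 / X) N = (h ^ (N * (N + 1)) / (-X) ^ N) *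
      (poch (h ^ 2) X N * (poch (h ^ 2) (h ^ 2 / X) N * (-X) ^ N / h ^ (N * (N + 1)))) := by
      field_simp
    rw [a3, ← a1, Finset.mul_sum, Finset.mul_sum]
    refine Finset.sum_congr rfl fun i hi => ?_
    rw [Finset.mem_range] at hi
    have g := gb_formula (h ^ 2) (2 * N) i (2 * N - i) (by omega)
    rw [show i + (2 * N - i) = 2 * N by omega] at g
    have n1 := poch_ne_zero (nzq hq1) i
    have n2 := poch_ne_zero (nzq hq1) (2 * N - i)
    rw [← g]
    have mono : h ^ (N * (N + 1)) / (-X) ^ N * (h ^ (i * (i - 1)) * (-(X / (h ^ 2) ^ N)) ^ i) =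
       h ^ (((i : ℤ) - N) * (((i : ℤ) - N) - 1)) * (-X) ^ ((i : ℤ) - N) := by
      rw [← neg_div]
      obtain ⟨a, ha⟩ : ∃ a, -X = exp a := ⟨log (-X), (exp_log (neg_ne_zero.2 hX)).symm⟩
      obtain ⟨t, rfl⟩ : ∃ a, h = exp a := ⟨log h, (exp_log hh).symm⟩
      rw [ha]
      simp only [← exp_nat_mul, ← exp_int_mul, ← exp_add, ← exp_neg, ← exp_sub]
      congr 1
      cases i with
      | zero => push_cast; ring
      | succ i => simp only [Nat.add_sub_cancel]; push_cast; ring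
    rw [← mono]
    field_simp
  obtain ⟨C1, hC1⟩ := poch_inv_bdd hq1 (nzq hq1)
  have a1 := (poch_tendsto hq1 (h ^ 2)).inv₀ hpq
  have tn := tannery (f := fun n : ℤ => h ^ (n * (n - 1)) * (-X) ^ n) ?_
    (fun A B => (poch (h ^ 2) (h ^ 2) A)⁻¹ * (poch (h ^ 2) (h ^ 2) B)⁻¹) (C1 * C1)
    ((pinf (h ^ 2) (h ^ 2))⁻¹ * (pinf (h ^ 2) (h ^ 2))⁻¹) ?_
    ((a1.comp Filter.tendsto_fst).mul (a1.comp Filter.tendsto_snd))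
  · have t2 : Filter.Tendsto (fun N : ℕ => 2 * N) Filter.atTop Filter.atTop :=
      Filter.tendsto_id.const_mul_atTop' (by norm_num)
    have l1 := ((poch_tendsto hq1 (h ^ 2)).comp t2).mul tn
    have l2 := (poch_tendsto hq1 X).mul (poch_tendsto hq1 (h ^ 2 / X))
    have e := tendsto_nhds_unique l2 (l1.congr fun N => (hfin N).symm)
    unfold br
    rw [e]
    field_simp
  · refine (gauss_summable hh hh1 (div_ne_zero (neg_ne_zero.2 hX) hh)).congr fun n => ?_
    congr 1
    rw [div_zpow, show n * (n - 1) = n ^ 2 - n by ring, zpow_sub₀ hh]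
    ring
  · intro A B
    have p1 := (norm_nonneg _).trans (hC1 0)
    rw [norm_mul]
    gcongr
    · exact hC1 _
    · exact hC1 _

lemma e2_add (a b : ℂ) : e2 (a + b) = e2 a * e2 b := by
  simp only [e2, mul_add, exp_add]
lemma e2_neg (a : ℂ) : e2 (-a) = (e2 a)⁻¹ := by
  simp only [e2, mul_neg, exp_neg]
lemma e2_sub (a b : ℂ) : e2 (a - b) = e2 a / e2 b := by
  simp only [e2, mul_sub, exp_sub]
lemma e2_ne (a : ℂ) : e2 a ≠ 0 := exp_ne_zero _
lemma e2_zpow (a : ℂ) (n : ℤ) : e2 a ^ n = e2 (n * a) := by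
  simp only [e2, ← exp_int_mul]; congr 1; ring
lemma e2_pow (a : ℂ) (n : ℕ) : e2 a ^ n = e2 (n * a) := by
  simp only [e2, ← exp_nat_mul]; congr 1; ring
lemma e2_int (n : ℤ) : e2 n = 1 := by
  rw [e2, mul_comm]; exact exp_int_mul_two_pi_mul_I n
lemma e2_zero : e2 0 = 1 := by simp [e2]
lemma e2_half : e2 (1 / 2) = -1 := by
  rw [e2, show 2 * (Real.pi : ℂ) * I * (1 / 2) = Real.pi * I by ring, exp_pi_mul_I]
lemma e2_quarter : e2 (1 / 4) = I := by
  rw [e2, show 2 * (Real.pi : ℂ) * I * (1 / 4) = Real.pi / 2 * I by ring, exp_pi_div_two_mul_I]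
lemma qpow_e2 (τ x : ℂ) : qpow τ x = e2 (τ * x) := by
  simp only [e2, qpow]; congr 1; ring

lemma e2_norm_lt {τ : ℂ} (hτ : 0 < τ.im) : ‖e2 τ‖ < 1 := by
  rw [e2, norm_exp, Real.exp_lt_one_iff]
  have : (2 * Real.pi * I * τ).re = - (2 * Real.pi * τ.im) := by simp
  rw [this]
  have := Real.pi_pos
  have := mul_pos this hτ
  linarith

lemma not_lat {τ z : ℂ} (h : ¬ InLattice τ z) (n : ℤ) : e2 z * e2 τ ^ n ≠ 1 := by
  rw [e2_zpow, ← e2_add, e2]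
  intro e
  rw [exp_eq_one_iff] at e
  obtain ⟨k, hk⟩ := e
  apply h
  refine ⟨k, -n, ?_⟩
  have hpi : (Real.pi : ℂ) ≠ 0 := by exact_mod_cast Real.pi_ne_zero
  have : z + n * τ = k := by
    have h2 : (2 * Real.pi * I : ℂ) ≠ 0 := by simp [hpi]
    apply mul_left_cancel₀ h2
    rw [hk]; ring
  push_cast
  linear_combination this

lemma not_lat' {τ z : ℂ} (h : ¬ InLattice τ z) (n : ℤ) : 1 - e2 (z + n * τ) ≠ 0 := by
  have := not_lat h n
  rw [e2_zpow, ← e2_add] at this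
  exact sub_ne_zero.2 this.symm

lemma eta_eq (τ : ℂ) : eta τ = e2 (τ / 24) * pinf (e2 τ) (e2 τ) := by
  rw [eta, pinf, qpow_e2]
  congr 1
  · congr 1; ring
  · refine tprod_congr fun n => ?_
    rw [qpow_e2, e2_pow, ← e2_add]
    congr 2; ring

lemma mumford_eq {τ : ℂ} (hτ : 0 < τ.im) (z : ℂ) :
    mumford 1 1 τ z = -I * e2 (τ / 8) * e2 (-z / 2) * pinf (e2 τ) (e2 τ) * br (e2 τ) (e2 z) := by
  have hq : e2 τ = e2 (τ / 2) ^ 2 := by rw [e2_pow]; congr 1; push_cast; ring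
  have ht := triple (h := e2 (τ / 2)) (X := (e2 z)⁻¹) (e2_ne _)
    (e2_norm_lt (by simpa using hτ)) (inv_ne_zero (e2_ne _))
  rw [← hq, br_inv (e2_norm_lt hτ) (e2_ne _)] at ht
  have e1 : mumford 1 1 τ z = (e2 (1 / 4) * e2 (τ / 8) * e2 (z / 2)) *
      ∑' n : ℤ, e2 (τ / 2) ^ (n * (n - 1)) * (-(e2 z)⁻¹) ^ n := by
    rw [mumford, ← (Equiv.neg ℤ).tsum_eq, ← tsum_mul_left]
    refine tsum_congr fun n => ?_
    have : -(e2 z)⁻¹ = e2 (-z - 1 / 2) := by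
      rw [e2_sub, e2_half, e2_neg]; ring
    rw [this, e2_zpow, e2_zpow, ← e2_add, ← e2_add, ← e2_add, ← e2_add, e2]
    congr 1
    simp only [Equiv.neg_apply]
    push_cast
    ring
  rw [e1, ht, e2_quarter]
  have : e2 (z / 2) = e2 (-z / 2) * e2 z := by rw [← e2_add]; congr 1; ring
  rw [this]
  have := e2_ne z
  field_simp

lemma mumford_odd {τ : ℂ} (hτ : 0 < τ.im) (z : ℂ) : mumford 1 1 τ (-z) = - mumford 1 1 τ z := by
  rw [mumford_eq hτ, mumford_eq hτ, e2_neg z, br_inv (e2_norm_lt hτ) (e2_ne _)]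
  have : e2 (- -z / 2) = e2 (-z / 2) * e2 z := by rw [← e2_add]; congr 1; ring
  rw [this]
  have := e2_ne z
  field_simp

lemma mumford_shift (τ z : ℂ) (s : ℤ) : mumford 1 1 τ (z + s * τ) =
    e2 (-s ^ 2 * τ / 2 - s * (z + 1 / 2)) * mumford 1 1 τ z := by
  rw [mumford, mumford, ← tsum_mul_left]
  conv_rhs => rw [← (Equiv.addRight s).tsum_eq]
  refine tsum_congr fun n => ?_
  rw [e2, ← exp_add]
  congr 1
  simp only [Equiv.coe_addRight]
  push_cast
  ring

def App (τ a b : ℂ) : ℂ := ∑' n : ℤ, e2 (τ * n ^ 2 + n * a) / (1 - e2 (b + n * τ))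

def Rh (τ z1 z2 : ℂ) : ℂ :=
  I * (eta τ ^ 3 * mumford 1 1 τ (z1 - z2) / (mumford 1 1 τ z1 * mumford 1 1 τ z2))

lemma App_diff {τ : ℂ} (hτ : 0 < τ.im) {z1 z2 : ℂ} (h1 : ¬ InLattice τ z1) (h2 : ¬ InLattice τ z2) :
    App τ (z1 - z2) z1 - App τ (z2 - z1) z2 = Rh τ z1 z2 := by
  have hq1 := e2_norm_lt hτ
  have hq := e2_ne τ
  have k := kron hq hq1 (e2_ne z1) (e2_ne z2) (not_lat h1) (not_lat h2)
  have hA : ∀ a b : ℂ, App τ (a - b) a =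
      ∑' n : ℤ, (e2 a / e2 b) ^ n * e2 τ ^ (n ^ 2) / (1 - e2 a * e2 τ ^ n) := by
    intro a b
    refine tsum_congr fun n => ?_
    rw [← e2_sub, e2_zpow, e2_zpow, e2_zpow, ← e2_add, ← e2_add]
    congr 2
    push_cast; ring
  rw [hA, hA, k, Rh, eta_eq, mumford_eq hτ, mumford_eq hτ, mumford_eq hτ, e2_sub]
  have b1 := br_ne hq hq1 (e2_ne z1) (not_lat h1)
  have b2 := br_ne hq hq1 (e2_ne z2) (not_lat h2)
  have hp := pinf_ne_zero hq1 (nzq hq1)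
  have x1 : e2 (τ / 24) ^ 3 = e2 (τ / 8) := by rw [e2_pow]; congr 1; push_cast; ring
  have x2 : e2 (-(z1 - z2) / 2) = e2 (-z1 / 2) * e2 (-z2 / 2) * e2 z2 := by
    rw [← e2_add, ← e2_add]; congr 1; ring
  rw [mul_pow, x1, x2]
  have := e2_ne (τ / 8)
  have := e2_ne (-z1 / 2)
  have := e2_ne (-z2 / 2)
  have := I_ne_zero
  generalize br (e2 τ) (e2 z1 / e2 z2) = b at *
  generalize e2 (-z1 / 2) = a1 at *
  generalize e2 (-z2 / 2) = a2 at *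
  field_simp

lemma not_lat_shift {τ z : ℂ} (h : ¬ InLattice τ z) (s : ℤ) : ¬ InLattice τ (z + s * τ) := by
  rintro ⟨a, b, e⟩
  exact h ⟨a, b - s, by push_cast; linear_combination e⟩

lemma App_shift {τ : ℂ} (hτ : 0 < τ.im) {z1 z2 : ℂ} (h1 : ¬ InLattice τ z1) (h2 : ¬ InLattice τ z2)
    (s : ℤ) : App τ (z1 - z2) (z1 + s * τ) - App τ (z2 - z1) (z2 + s * τ) =
      e2 (s ^ 2 * τ + s * (z1 + z2)) * Rh τ z1 z2 := by
  have := App_diff hτ (not_lat_shift h1 s) (not_lat_shift h2 s)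
  rw [show z1 + s * τ - (z2 + s * τ) = z1 - z2 by ring,
    show z2 + s * τ - (z1 + s * τ) = z2 - z1 by ring] at this
  rw [this, Rh, Rh, mumford_shift, mumford_shift, show z1 + s * τ - (z2 + s * τ) = z1 - z2 by ring]
  have e : e2 (s ^ 2 * τ + s * (z1 + z2)) =
    (e2 (-s ^ 2 * τ / 2 - s * (z1 + 1 / 2)))⁻¹ * (e2 (-s ^ 2 * τ / 2 - s * (z2 + 1 / 2)))⁻¹ := by
    have h : e2 (s ^ 2 * τ + s * (z1 + z2)) = e2 (s ^ 2 * τ + s * (z1 + z2) + s) := by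
      rw [e2_add _ (s : ℂ), e2_int, mul_one]
    rw [h, ← e2_neg, ← e2_neg, ← e2_add]
    congr 1
    ring
  rw [e]
  simp only [div_eq_mul_inv, mul_inv]
  ring

lemma e2_gauss {τ : ℂ} (hτ : 0 < τ.im) (a : ℂ) : Summable fun r : ℤ => ‖e2 (τ * r ^ 2 + r * a)‖ := by
  refine (gauss_exp_summable (w := 2 * τ) (by simpa using hτ) a).congr fun n => ?_
  rw [e2]; congr 2; ring

lemma den_bdd {τ : ℂ} (hτ : 0 < τ.im) (p : ℂ) :
    ∃ C : ℝ, ∀ n : ℤ, ‖(1 - e2 (p + n * τ))⁻¹‖ ≤ C := by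
  obtain ⟨C, hC⟩ := inv_bdd (e2_ne τ) (e2_norm_lt hτ) (e2_ne p)
  refine ⟨C, fun n => ?_⟩
  have := hC n
  rwa [e2_zpow, ← e2_add] at this

def Hs (μ τ b p : ℂ) (n : ℤ) : ℂ :=
  ∑' r : ℤ, e2 (τ * μ * (r - n) ^ 2 + μ * (r - n) * b) / (1 - e2 (p + r * τ))

lemma Hs0_summable {μ τ : ℂ} (hτ : 0 < τ.im) (hμ : 0 < (τ * μ).im) (b p : ℂ) :
    Summable fun r : ℤ => e2 (τ * μ * r ^ 2 + μ * r * b) / (1 - e2 (p + r * τ)) := by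
  obtain ⟨C, hC⟩ := den_bdd hτ p
  refine Summable.of_norm_bounded ((e2_gauss hμ (μ * b)).mul_right C) fun r => ?_
  rw [div_eq_mul_inv, norm_mul, show τ * μ * r ^ 2 + μ * r * b = τ * μ * r ^ 2 + r * (μ * b) by ring]
  exact mul_le_mul_of_nonneg_left (hC r) (norm_nonneg _)

lemma Phi_eq (μ τ p r : ℂ) : Phi μ 0 τ p (-r) 0 = Hs μ τ (p - r) p 0 - Hs μ τ (-(p - r)) r 0 := by
  rw [Phi, Phi1, Phi2, Hs, Hs]
  simp only [mul_zero, exp_zero, one_mul, zero_mul, add_zero, neg_neg, Int.cast_zero, sub_zero]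
  congr 1
  · refine tsum_congr fun j => ?_
    rw [← e2, qpow_e2, qpow_e2, ← e2_add, ← e2_add]
    congr 2
    · ring
    · ring_nf
  · refine tsum_congr fun j => ?_
    rw [neg_mul, ← mul_neg, ← e2, qpow_e2, qpow_e2, ← e2_add, ← e2_add]
    congr 2
    · ring
    · ring_nf

lemma jTheta_eq {μ : ℂ} (h0 : μ ≠ 0) (k τ z : ℂ) : jTheta k μ τ z =
    ∑' r : ℤ, e2 (μ * r * z + k * z / 2 + τ * (μ * r ^ 2 + r * k + k ^ 2 / (4 * μ))) := by
  refine tsum_congr fun r => ?_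
  rw [← e2, qpow_e2, ← e2_add]
  congr 1
  field_simp
  ring

lemma jTheta0_eq {μ : ℂ} (h0 : μ ≠ 0) (τ z : ℂ) : jTheta 0 μ τ (z / μ) =
    ∑' r : ℤ, e2 (τ * μ * r ^ 2 + r * z) := by
  rw [jTheta_eq h0]
  refine tsum_congr fun r => ?_
  congr 1
  field_simp
  ring

lemma jTheta_neg {μ : ℂ} (h0 : μ ≠ 0) (k τ z : ℂ) : jTheta k μ τ (-z) = jTheta (-k) μ τ z := by
  rw [jTheta_eq h0, jTheta_eq h0, ← (Equiv.neg ℤ).tsum_eq]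
  refine tsum_congr fun r => ?_
  congr 1
  simp only [Equiv.neg_apply]
  push_cast
  ring

lemma jTheta_per {μ : ℂ} (h0 : μ ≠ 0) (k τ z : ℂ) (N : ℤ) (hk : k = 2 * μ * N) :
    jTheta k μ τ z = jTheta (-k) μ τ z := by
  rw [jTheta_eq h0, jTheta_eq h0]
  conv_rhs => rw [← (Equiv.addRight (2 * N)).tsum_eq]
  refine tsum_congr fun r => ?_
  congr 1
  simp only [Equiv.coe_addRight]
  push_cast
  subst hk
  field_simp
  ring

lemma jTheta_term_summable {μ τ : ℂ} (hμ : 0 < (τ * μ).im) (k z : ℂ) : Summable fun r : ℤ =>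
    e2 (μ * r * z + k * z / 2 + τ * (μ * r ^ 2 + r * k + k ^ 2 / (4 * μ))) := by
  have := ((e2_gauss hμ (μ * z + τ * k)).of_norm).mul_left (e2 (k * z / 2 + τ * (k ^ 2 / (4 * μ))))
  refine this.congr fun r => ?_
  rw [← e2_add]
  congr 1
  ring

lemma geo_neg {u : ℂ} (hu : u ≠ 0) (h1 : 1 - u ≠ 0) (K : ℕ) :
    (u ^ K)⁻¹ / (1 - u) = 1 / (1 - u) + ∑ k ∈ Finset.Icc 1 K, (u ^ k)⁻¹ := by
  induction K with
  | zero => simp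
  | succ K ih =>
    rw [Finset.sum_Icc_succ_top (by omega), ← add_assoc, ← ih]
    have := pow_ne_zero K hu
    rw [pow_succ]
    field_simp
    ring

lemma geo_pos {u : ℂ} (h1 : 1 - u ≠ 0) (K : ℕ) :
    (u ^ K) / (1 - u) = 1 / (1 - u) - ∑ k ∈ Finset.range K, u ^ k := by
  induction K with
  | zero => simp
  | succ K ih =>
    rw [Finset.sum_range_succ, ← sub_sub, ← ih]
    rw [pow_succ]
    field_simp
    ring

lemma Hs_pos {μ τ : ℂ} {M : ℕ} (hM : (M : ℂ) = 2 * μ) (h0 : μ ≠ 0) (hτ : 0 < τ.im)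
    (hμ : 0 < (τ * μ).im) (b : ℂ) {p : ℂ} (hp : ¬ InLattice τ p) (N : ℕ) :
    Hs μ τ b p N = e2 (τ * μ * N ^ 2 + μ * N * (2 * p - b)) * (Hs μ τ b p 0 +
      ∑ k ∈ Finset.Icc 1 (M * N), e2 (-(k * (2 * p - b) / 2) - τ * (k ^ 2 / (4 * μ))) *
        jTheta (-k) μ τ b) := by
  have s1 := Hs0_summable hτ hμ b p
  have s2 : ∀ k : ℕ, Summable fun r : ℤ => e2 (-(k * (2 * p - b) / 2) - τ * (k ^ 2 / (4 * μ))) *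
    e2 (μ * r * b + (-k) * b / 2 + τ * (μ * r ^ 2 + r * (-k) + (-k) ^ 2 / (4 * μ))) := fun k =>
    (jTheta_term_summable hμ (-k) b).mul_left _
  have e : ∀ k : ℕ, e2 (-(k * (2 * p - b) / 2) - τ * (k ^ 2 / (4 * μ))) * jTheta (-k) μ τ b =
      ∑' r : ℤ, e2 (-(k * (2 * p - b) / 2) - τ * (k ^ 2 / (4 * μ))) *
    e2 (μ * r * b + (-k) * b / 2 + τ * (μ * r ^ 2 + r * (-k) + (-k) ^ 2 / (4 * μ))) := fun k => by
    rw [jTheta_eq h0, tsum_mul_left]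
  rw [Finset.sum_congr rfl (fun k _ => e k), ← Summable.tsum_finsetSum (fun k _ => s2 k)]
  have e0 : Hs μ τ b p 0 = ∑' r : ℤ, e2 (τ * μ * r ^ 2 + μ * r * b) / (1 - e2 (p + r * τ)) := by
    simp [Hs]
  rw [e0, ← s1.tsum_add (summable_sum fun k _ => s2 k), ← tsum_mul_left, Hs]
  refine tsum_congr fun r => ?_
  have g := geo_neg (e2_ne (p + r * τ)) (not_lat' hp r) (M * N)
  have h1 : e2 (τ * μ * (r - (N : ℤ)) ^ 2 + μ * (r - (N : ℤ)) * b) =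
      e2 (τ * μ * N ^ 2 + μ * N * (2 * p - b)) * e2 (τ * μ * r ^ 2 + μ * r * b) *
        (e2 (p + r * τ) ^ (M * N))⁻¹ := by
    rw [e2_pow, ← e2_neg, ← e2_add, ← e2_add]
    congr 1
    push_cast
    rw [hM]
    ring
  have h2 : ∀ k : ℕ, e2 (-(k * (2 * p - b) / 2) - τ * (k ^ 2 / (4 * μ))) *
      e2 (μ * r * b + (-k) * b / 2 + τ * (μ * r ^ 2 + r * (-k) + (-k) ^ 2 / (4 * μ))) =
      e2 (τ * μ * r ^ 2 + μ * r * b) * (e2 (p + r * τ) ^ k)⁻¹ := fun k => by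
    rw [e2_pow, ← e2_neg, ← e2_add, ← e2_add]
    congr 1
    ring
  rw [h1, mul_div_assoc, g, Finset.sum_congr rfl (fun k _ => h2 k), ← Finset.mul_sum]
  ring

lemma Hs_neg {μ τ : ℂ} {M : ℕ} (hM : (M : ℂ) = 2 * μ) (h0 : μ ≠ 0) (hτ : 0 < τ.im)
    (hμ : 0 < (τ * μ).im) (b : ℂ) {p : ℂ} (hp : ¬ InLattice τ p) (N : ℕ) :
    Hs μ τ b p (-(N : ℤ)) = e2 (τ * μ * N ^ 2 - μ * N * (2 * p - b)) * (Hs μ τ b p 0 -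
      ∑ k ∈ Finset.range (M * N), e2 (k * (2 * p - b) / 2 - τ * (k ^ 2 / (4 * μ))) *
        jTheta k μ τ b) := by
  have s1 := Hs0_summable hτ hμ b p
  have s2 : ∀ k : ℕ, Summable fun r : ℤ => e2 (k * (2 * p - b) / 2 - τ * (k ^ 2 / (4 * μ))) *
    e2 (μ * r * b + k * b / 2 + τ * (μ * r ^ 2 + r * k + k ^ 2 / (4 * μ))) := fun k =>
    (jTheta_term_summable hμ k b).mul_left _
  have e : ∀ k : ℕ, e2 (k * (2 * p - b) / 2 - τ * (k ^ 2 / (4 * μ))) * jTheta k μ τ b =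
      ∑' r : ℤ, e2 (k * (2 * p - b) / 2 - τ * (k ^ 2 / (4 * μ))) *
    e2 (μ * r * b + k * b / 2 + τ * (μ * r ^ 2 + r * k + k ^ 2 / (4 * μ))) := fun k => by
    rw [jTheta_eq h0, tsum_mul_left]
  rw [Finset.sum_congr rfl (fun k _ => e k), ← Summable.tsum_finsetSum (fun k _ => s2 k)]
  have e0 : Hs μ τ b p 0 = ∑' r : ℤ, e2 (τ * μ * r ^ 2 + μ * r * b) / (1 - e2 (p + r * τ)) := by
    simp [Hs]
  rw [e0, ← s1.tsum_sub (summable_sum fun k _ => s2 k), ← tsum_mul_left, Hs]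
  refine tsum_congr fun r => ?_
  have g := geo_pos (not_lat' hp r) (M * N)
  have h1 : e2 (τ * μ * (r - (-(N : ℤ) : ℤ)) ^ 2 + μ * (r - (-(N : ℤ) : ℤ)) * b) =
      e2 (τ * μ * N ^ 2 - μ * N * (2 * p - b)) * e2 (τ * μ * r ^ 2 + μ * r * b) *
        (e2 (p + r * τ) ^ (M * N)) := by
    rw [e2_pow, ← e2_add, ← e2_add]
    congr 1
    push_cast
    rw [hM]
    ring
  have h2 : ∀ k : ℕ, e2 (k * (2 * p - b) / 2 - τ * (k ^ 2 / (4 * μ))) *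
      e2 (μ * r * b + k * b / 2 + τ * (μ * r ^ 2 + r * k + k ^ 2 / (4 * μ))) =
      e2 (τ * μ * r ^ 2 + μ * r * b) * (e2 (p + r * τ) ^ k) := fun k => by
    rw [e2_pow, ← e2_add, ← e2_add]
    congr 1
    ring
  rw [h1, mul_div_assoc, g, Finset.sum_congr rfl (fun k _ => h2 k), ← Finset.mul_sum]
  ring

lemma range_Icc {f : ℕ → ℂ} {K : ℕ} (h0 : f 0 = 0) (hK : f K = 0) :
    ∑ k ∈ Finset.range K, f k = ∑ k ∈ Finset.Icc 1 K, f k := by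
  have h1 := Finset.sum_range_succ f K
  have h2 := Finset.sum_range_succ' f K
  have h3 : Finset.Icc 1 K = Finset.Ico 1 (K + 1) := by ext; simp
  rw [h3, Finset.sum_Ico_eq_sum_range]
  rw [h0, add_zero] at h2
  rw [hK, add_zero, h2] at h1
  rw [← h1]
  refine Finset.sum_congr (by simp) fun k _ => by rw [add_comm]

/-- the difference term indexed by `n`. -/
def Dn (μ τ p r d : ℂ) (n : ℤ) : ℂ :=
  e2 (τ * n ^ 2 + n * d) * (Hs μ τ (p - r) p n - Hs μ τ (-(p - r)) r n)

def Tn (μ τ p r d : ℂ) (n : ℤ) : ℂ := e2 (τ * (μ + 1) * n ^ 2 + n * (d + μ * (p + r)))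

def Cn (μ τ p r d : ℂ) (n : ℤ) : ℂ := Tn μ τ p r d n * Phi μ 0 τ p (-r) 0 - Dn μ τ p r d n

lemma Cn_pos {μ τ : ℂ} {M : ℕ} (hM : (M : ℂ) = 2 * μ) (h0 : μ ≠ 0) (hτ : 0 < τ.im)
    (hμ : 0 < (τ * μ).im) {p r : ℂ} (hp : ¬ InLattice τ p) (hr : ¬ InLattice τ r) (d : ℂ) (N : ℕ) :
    Cn μ τ p r d N = ∑ k ∈ Finset.Icc 1 (M * N), e2 (τ * (μ + 1) * N ^ 2 + N * d
      + (2 * μ * N - k) * (p + r) / 2 - τ * (k ^ 2 / (4 * μ))) *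
        (jTheta k μ τ (p - r) - jTheta (-k) μ τ (p - r)) := by
  rw [Cn, Dn, Phi_eq, Hs_pos hM h0 hτ hμ _ hp, Hs_pos hM h0 hτ hμ _ hr]
  rw [show 2 * p - (p - r) = p + r by ring, show 2 * r - -(p - r) = p + r by ring]
  simp only [jTheta_neg h0, neg_neg]
  have e : Tn μ τ p r d N = e2 (τ * (N : ℤ) ^ 2 + (N : ℤ) * d) * e2 (τ * μ * N ^ 2 + μ * N * (p + r)) := by
    rw [Tn, ← e2_add]; congr 1; push_cast; ring
  have e' : ∀ k : ℕ, e2 (τ * (μ + 1) * N ^ 2 + N * d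
      + (2 * μ * N - k) * (p + r) / 2 - τ * (k ^ 2 / (4 * μ))) *
        (jTheta k μ τ (p - r) - jTheta (-k) μ τ (p - r)) =
      Tn μ τ p r d N * (e2 (-(k * (p + r) / 2) - τ * (k ^ 2 / (4 * μ))) * jTheta k μ τ (p - r)
       - e2 (-(k * (p + r) / 2) - τ * (k ^ 2 / (4 * μ))) * jTheta (-k) μ τ (p - r)) := fun k => by
    rw [← mul_sub, ← mul_assoc, Tn, ← e2_add]
    congr 2
    push_cast
    ring
  rw [Finset.sum_congr rfl fun k _ => e' k, ← Finset.mul_sum, Finset.sum_sub_distrib, e]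
  ring

lemma Cn_neg {μ τ : ℂ} {M : ℕ} (hM : (M : ℂ) = 2 * μ) (h0 : μ ≠ 0) (hτ : 0 < τ.im)
    (hμ : 0 < (τ * μ).im) {p r : ℂ} (hp : ¬ InLattice τ p) (hr : ¬ InLattice τ r) (d : ℂ) (N : ℕ) :
    Cn μ τ p r d (-(N : ℤ)) = ∑ k ∈ Finset.Icc 1 (M * N), e2 (τ * (μ + 1) * N ^ 2 - N * d
      - (2 * μ * N - k) * (p + r) / 2 - τ * (k ^ 2 / (4 * μ))) *
        (jTheta k μ τ (p - r) - jTheta (-k) μ τ (p - r)) := by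
  rw [← range_Icc (by simp) (by
    rw [jTheta_per h0 ((M * N : ℕ) : ℂ) τ _ N (by push_cast; rw [hM]), sub_self, mul_zero])]
  rw [Cn, Dn, Phi_eq, Hs_neg hM h0 hτ hμ _ hp, Hs_neg hM h0 hτ hμ _ hr]
  rw [show 2 * p - (p - r) = p + r by ring, show 2 * r - -(p - r) = p + r by ring]
  simp only [jTheta_neg h0]
  have e : Tn μ τ p r d (-(N : ℤ)) = e2 (τ * (-(N : ℤ) : ℤ) ^ 2 + (-(N : ℤ) : ℤ) * d) *
      e2 (τ * μ * N ^ 2 - μ * N * (p + r)) := by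
    rw [Tn, ← e2_add]; congr 1; push_cast; ring
  have e' : ∀ k : ℕ, e2 (τ * (μ + 1) * N ^ 2 - N * d
      - (2 * μ * N - k) * (p + r) / 2 - τ * (k ^ 2 / (4 * μ))) *
        (jTheta k μ τ (p - r) - jTheta (-k) μ τ (p - r)) =
      Tn μ τ p r d (-(N : ℤ)) * (e2 (k * (p + r) / 2 - τ * (k ^ 2 / (4 * μ))) * jTheta k μ τ (p - r)
       - e2 (k * (p + r) / 2 - τ * (k ^ 2 / (4 * μ))) * jTheta (-k) μ τ (p - r)) := fun k => by
    rw [← mul_sub, ← mul_assoc, Tn, ← e2_add]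
    congr 2
    push_cast
    ring
  rw [Finset.sum_congr rfl fun k _ => e' k, ← Finset.mul_sum, Finset.sum_sub_distrib, e]
  ring

lemma double_summable {μ τ : ℂ} (hτ : 0 < τ.im) (hμ : 0 < (τ * μ).im) (b p d : ℂ) :
    Summable fun x : ℤ × ℤ => e2 (τ * x.1 ^ 2 + x.1 * d) *
      (e2 (τ * μ * x.2 ^ 2 + μ * x.2 * b) / (1 - e2 (p + (x.2 + x.1) * τ))) := by
  obtain ⟨C, hC⟩ := den_bdd hτ p
  have := (e2_gauss hτ d).mul_of_nonneg (e2_gauss hμ (μ * b)) (fun _ => norm_nonneg _)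
    (fun _ => norm_nonneg _)
  refine Summable.of_norm_bounded (this.mul_right C) fun x => ?_
  rw [div_eq_mul_inv, norm_mul, norm_mul, ← mul_assoc,
    show τ * μ * x.2 ^ 2 + μ * x.2 * b = τ * μ * x.2 ^ 2 + x.2 * (μ * b) by ring]
  have h := hC (x.2 + x.1)
  push_cast at h
  exact mul_le_mul_of_nonneg_left h (by positivity)

lemma Hs_sum {μ τ : ℂ} (hτ : 0 < τ.im) (hμ : 0 < (τ * μ).im) (b p d : ℂ) :
    Summable (fun s : ℤ => e2 (τ * μ * s ^ 2 + μ * s * b) * App τ d (p + s * τ)) ∧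
    HasSum (fun n : ℤ => e2 (τ * n ^ 2 + n * d) * Hs μ τ b p n)
      (∑' s : ℤ, e2 (τ * μ * s ^ 2 + μ * s * b) * App τ d (p + s * τ)) := by
  have S := double_summable hτ hμ b p d
  have e1 : ∀ n : ℤ, e2 (τ * n ^ 2 + n * d) * Hs μ τ b p n = ∑' s : ℤ, e2 (τ * n ^ 2 + n * d) *
      (e2 (τ * μ * s ^ 2 + μ * s * b) / (1 - e2 (p + (s + n) * τ))) := by
    intro n
    rw [tsum_mul_left, Hs, ← (Equiv.addRight n).tsum_eq]
    congr 1
    refine tsum_congr fun s => ?_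
    simp only [Equiv.coe_addRight]
    push_cast
    rw [add_sub_cancel_right]
  have e2' : ∀ s : ℤ, e2 (τ * μ * s ^ 2 + μ * s * b) * App τ d (p + s * τ) =
      ∑' n : ℤ, e2 (τ * n ^ 2 + n * d) *
      (e2 (τ * μ * s ^ 2 + μ * s * b) / (1 - e2 (p + (s + n) * τ))) := by
    intro s
    rw [App, ← tsum_mul_left]
    refine tsum_congr fun n => ?_
    rw [show p + s * τ + n * τ = p + (s + n) * τ by ring]
    ring
  constructor
  · simp only [e2']
    exact S.prod_symm.prod
  · simp only [e1, e2']
    rw [S.tsum_comm (f := fun n s : ℤ => e2 (τ * n ^ 2 + n * d) *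
      (e2 (τ * μ * s ^ 2 + μ * s * b) / (1 - e2 (p + (s + n) * τ))))]
    exact S.prod.hasSum

def Ws (μ τ p r d : ℂ) (s : ℤ) : ℂ := e2 (τ * μ * s ^ 2 + μ * s * (p - r)) * App τ d (p + s * τ)
  - e2 (τ * μ * s ^ 2 + μ * s * -(p - r)) * App τ d (r + s * τ)

lemma Ws_summable {μ τ : ℂ} (hτ : 0 < τ.im) (hμ : 0 < (τ * μ).im) (p r d : ℂ) :
    Summable (Ws μ τ p r d) :=
  (Hs_sum hτ hμ (p - r) p d).1.sub (Hs_sum hτ hμ (-(p - r)) r d).1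

/-- The key rearrangement. -/
lemma key {μ τ : ℂ} {M : ℕ} (hM : (M : ℂ) = 2 * μ) (h0 : μ ≠ 0) (h01 : μ + 1 ≠ 0) (hτ : 0 < τ.im)
    (hμ : 0 < (τ * μ).im) {p r : ℂ} (hp : ¬ InLattice τ p) (hr : ¬ InLattice τ r) (d : ℂ) :
    HasSum (fun j : ℕ => Cn μ τ p r d (j + 1 : ℕ) + Cn μ τ p r d (-(j + 1 : ℕ)))
      (jTheta 0 (μ + 1) τ ((d + μ * (p + r)) / (μ + 1)) * Phi μ 0 τ p (-r) 0
        - ∑' s, Ws μ τ p r d s) := by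
  have hD : HasSum (Dn μ τ p r d) (∑' s, Ws μ τ p r d s) := by
    have a := Hs_sum hτ hμ (p - r) p d
    have b := Hs_sum hτ hμ (-(p - r)) r d
    have := a.2.sub b.2
    rw [← a.1.tsum_sub b.1] at this
    refine this.congr_fun ?_ |> fun h => h
    intro n
    rw [Dn]; ring
  have him : 0 < (τ * (μ + 1)).im := by
    rw [mul_add, mul_one, add_im]; exact add_pos hμ hτ
  have hT : HasSum (Tn μ τ p r d) (jTheta 0 (μ + 1) τ ((d + μ * (p + r)) / (μ + 1))) := by
    rw [jTheta0_eq h01]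
    exact (e2_gauss him _).of_norm.hasSum
  have hC : HasSum (Cn μ τ p r d) _ := (hT.mul_right (Phi μ 0 τ p (-r) 0)).sub hD
  have hz : Cn μ τ p r d 0 = 0 := by
    have := Cn_pos hM h0 hτ hμ hp hr d 0
    simpa using this
  have h := hC.nat_add_neg
  rw [hz, add_zero] at h
  have h' := (hasSum_nat_add_iff' 1).2 h
  rw [Finset.sum_range_one] at h'
  simp only [Nat.cast_zero, neg_zero, hz, add_zero, sub_zero] at h'
  exact h'

lemma Rh_odd {τ : ℂ} (hτ : 0 < τ.im) (z1 z2 z3 : ℂ) : Rh τ z3 (-(z1 - z2 - z3)) =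
    -(I * (eta τ ^ 3 * mumford 1 1 τ (z1 - z2) / (mumford 1 1 τ z3 * mumford 1 1 τ (z1 - z2 - z3)))) := by
  rw [Rh, mumford_odd hτ, show z3 - -(z1 - z2 - z3) = z1 - z2 by ring]
  rw [mul_neg, div_neg, mul_neg]

lemma InLattice_neg {τ z : ℂ} (h : ¬ InLattice τ z) : ¬ InLattice τ (-z) := by
  rintro ⟨a, b, e⟩
  exact h ⟨-a, -b, by push_cast; linear_combination -e⟩

lemma jTheta0_neg {μ : ℂ} (h0 : μ ≠ 0) (τ z : ℂ) : jTheta 0 μ τ (-z) = jTheta 0 μ τ z := by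
  rw [jTheta_neg h0, neg_zero]

lemma W_diff {μ τ : ℂ} (h01 : μ + 1 ≠ 0) (hτ : 0 < τ.im) (hμ : 0 < (τ * μ).im) {z1 z2 z3 : ℂ}
    (h1 : ¬ InLattice τ z1) (h2 : ¬ InLattice τ z2) (h3 : ¬ InLattice τ z3)
    (h4 : ¬ InLattice τ (z1 - z2 - z3)) :
    ∑' s, Ws μ τ z1 z3 (z1 - z2) s - ∑' s, Ws μ τ z2 (-(z1 - z2 - z3)) (z2 - z1) s =
    Rh τ z1 z2 * jTheta 0 (μ + 1) τ (((z1 + z2) + μ * (z1 - z3)) / (μ + 1)) -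
    Rh τ z3 (-(z1 - z2 - z3)) *
      jTheta 0 (μ + 1) τ (((z1 - z2 - 2 * z3) + μ * (z1 - z3)) / (μ + 1)) := by
  have him : 0 < (τ * (μ + 1)).im := by
    rw [mul_add, mul_one, add_im]; exact add_pos hμ hτ
  rw [← (Ws_summable hτ hμ _ _ _).tsum_sub (Ws_summable hτ hμ _ _ _)]
  rw [← jTheta0_neg h01 τ (((z1 - z2 - 2 * z3) + μ * (z1 - z3)) / (μ + 1)), ← neg_div,
    jTheta0_eq h01, jTheta0_eq h01, ← tsum_mul_left, ← tsum_mul_left,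
    ← ((e2_gauss him _).of_norm.mul_left _).tsum_sub ((e2_gauss him _).of_norm.mul_left _)]
  refine tsum_congr fun s => ?_
  have a := App_shift hτ h1 h2 s
  have b := App_shift hτ h3 (InLattice_neg h4) s
  rw [show z3 - -(z1 - z2 - z3) = z1 - z2 by ring, show -(z1 - z2 - z3) - z3 = z2 - z1 by ring] at b
  have c1 : e2 (τ * (μ + 1) * s ^ 2 + s * ((z1 + z2) + μ * (z1 - z3))) =
      e2 (τ * μ * s ^ 2 + μ * s * (z1 - z3)) * e2 (s ^ 2 * τ + s * (z1 + z2)) := by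
    rw [← e2_add]; congr 1; ring
  have c2 : e2 (τ * (μ + 1) * s ^ 2 + s * (-((z1 - z2 - 2 * z3) + μ * (z1 - z3)))) =
      e2 (τ * μ * s ^ 2 + μ * s * -(z1 - z3)) * e2 (s ^ 2 * τ + s * (z3 + -(z1 - z2 - z3))) := by
    rw [← e2_add]; congr 1; ring
  rw [c1, c2, Ws, Ws, show z2 - -(z1 - z2 - z3) = z1 - z3 by ring]
  linear_combination e2 (τ * μ * s ^ 2 + μ * s * (z1 - z3)) * a -
    e2 (τ * μ * s ^ 2 + μ * s * -(z1 - z3)) * b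

lemma main_aux {μ τ : ℂ} {M : ℕ} (hM : (M : ℂ) = 2 * μ) (h0 : μ ≠ 0) (h01 : μ + 1 ≠ 0) (hτ : 0 < τ.im)
    (hμ : 0 < (τ * μ).im) {z1 z2 z3 : ℂ}
    (h1 : ¬ InLattice τ z1) (h2 : ¬ InLattice τ z2) (h3 : ¬ InLattice τ z3)
    (h4 : ¬ InLattice τ (z1 - z2 - z3)) (F : ℕ → ℂ)
    (hF : ∀ j, F j = (Cn μ τ z2 (-(z1 - z2 - z3)) (z2 - z1) (j + 1 : ℕ) +
        Cn μ τ z2 (-(z1 - z2 - z3)) (z2 - z1) (-(j + 1 : ℕ))) -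
      (Cn μ τ z1 z3 (z1 - z2) (j + 1 : ℕ) + Cn μ τ z1 z3 (z1 - z2) (-(j + 1 : ℕ)))) :
    jTheta 0 (μ + 1) τ (((z1 - z2) + μ * (z1 + z3)) / (μ + 1)) * Phi μ 0 τ z1 (-z3) 0 -
      jTheta 0 (μ + 1) τ (((z1 - z2) + μ * (z1 - 2 * z2 - z3)) / (μ + 1)) *
        Phi μ 0 τ z2 (z1 - z2 - z3) 0 + ∑' j, F j =
      I * jTheta 0 (μ + 1) τ (((z1 + z2) + μ * (z1 - z3)) / (μ + 1)) *
          (eta τ ^ 3 * mumford 1 1 τ (z1 - z2) / (mumford 1 1 τ z1 * mumford 1 1 τ z2)) +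
        I * jTheta 0 (μ + 1) τ (((z1 - z2 - 2 * z3) + μ * (z1 - z3)) / (μ + 1)) *
          (eta τ ^ 3 * mumford 1 1 τ (z1 - z2) /
            (mumford 1 1 τ z3 * mumford 1 1 τ (z1 - z2 - z3))) := by
  have kA := key hM h0 h01 hτ hμ h1 h3 (z1 - z2)
  have kB := key hM h0 h01 hτ hμ h2 (InLattice_neg h4) (z2 - z1)
  have hS := (kB.sub kA).tsum_eq
  rw [← tsum_congr hF] at hS
  have hW := W_diff h01 hτ hμ h1 h2 h3 h4
  rw [Rh_odd hτ, Rh] at hW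
  have e : jTheta 0 (μ + 1) τ ((z2 - z1 + μ * (z2 + -(z1 - z2 - z3))) / (μ + 1)) =
      jTheta 0 (μ + 1) τ (((z1 - z2) + μ * (z1 - 2 * z2 - z3)) / (μ + 1)) := by
    rw [← jTheta0_neg h01]
    congr 1
    ring
  rw [neg_neg, e] at hS
  rw [hS]
  linear_combination hW

theorem statement11 (m : ℝ) (M : ℕ) (hM : 0 < M) (hm : m = M / 2)
    (τ : ℂ) (hτ : 0 < τ.im) (z1 z2 z3 : ℂ)
    (h1 : ¬ InLattice τ z1) (h2 : ¬ InLattice τ z2) (h3 : ¬ InLattice τ z3)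
    (h4 : ¬ InLattice τ (z1 - z2 - z3)) :
    jTheta 0 ((m : ℂ) + 1) τ (((z1 - z2) + (m : ℂ) * (z1 + z3)) / ((m : ℂ) + 1)) *
          Phi (m : ℂ) 0 τ z1 (-z3) 0 -
        jTheta 0 ((m : ℂ) + 1) τ
            (((z1 - z2) + (m : ℂ) * (z1 - 2 * z2 - z3)) / ((m : ℂ) + 1)) *
          Phi (m : ℂ) 0 τ z2 (z1 - z2 - z3) 0 +
        ∑' j : ℕ, ∑ k ∈ Finset.Icc 1 (M * (j + 1)),
          qpow τ (((m : ℂ) + 1) * ((j : ℂ) + 1) ^ 2) *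
            qpow τ (-((k : ℂ) ^ 2) / (4 * (m : ℂ))) *
            (e2 (((j : ℂ) + 1) * (z1 - z2)) *
                Complex.exp (Real.pi * Complex.I *
                  (2 * (m : ℂ) * ((j : ℂ) + 1) - (k : ℂ)) * (z1 - 2 * z2 - z3)) +
              e2 (-(((j : ℂ) + 1) * (z1 - z2))) *
                Complex.exp (-(Real.pi * Complex.I) *
                  (2 * (m : ℂ) * ((j : ℂ) + 1) - (k : ℂ)) * (z1 - 2 * z2 - z3)) -
              e2 (((j : ℂ) + 1) * (z1 - z2)) *
                Complex.exp (Real.pi * Complex.I *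
                  (2 * (m : ℂ) * ((j : ℂ) + 1) - (k : ℂ)) * (z1 + z3)) -
              e2 (-(((j : ℂ) + 1) * (z1 - z2))) *
                Complex.exp (-(Real.pi * Complex.I) *
                  (2 * (m : ℂ) * ((j : ℂ) + 1) - (k : ℂ)) * (z1 + z3))) *
            (jTheta (k : ℂ) (m : ℂ) τ (z1 - z3) - jTheta (-(k : ℂ)) (m : ℂ) τ (z1 - z3)) =
      Complex.I *
          jTheta 0 ((m : ℂ) + 1) τ (((z1 + z2) + (m : ℂ) * (z1 - z3)) / ((m : ℂ) + 1)) *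
          (eta τ ^ 3 * mumford 1 1 τ (z1 - z2) /
            (mumford 1 1 τ z1 * mumford 1 1 τ z2)) +
        Complex.I *
          jTheta 0 ((m : ℂ) + 1) τ
            (((z1 - z2 - 2 * z3) + (m : ℂ) * (z1 - z3)) / ((m : ℂ) + 1)) *
          (eta τ ^ 3 * mumford 1 1 τ (z1 - z2) /
            (mumford 1 1 τ z3 * mumford 1 1 τ (z1 - z2 - z3))) := by
  have hMr : (0 : ℝ) < M := by exact_mod_cast hM
  have hm0 : 0 < m := by rw [hm]; positivity
  have hM' : (M : ℂ) = 2 * (m : ℂ) := by rw [hm]; push_cast; ring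
  have h0 : (m : ℂ) ≠ 0 := by exact_mod_cast hm0.ne'
  have h01 : (m : ℂ) + 1 ≠ 0 := by
    have : m + 1 ≠ 0 := by positivity
    exact_mod_cast this
  have hμ : 0 < (τ * (m : ℂ)).im := by
    rw [mul_comm, Complex.im_ofReal_mul]; positivity
  refine main_aux hM' h0 h01 hτ hμ h1 h2 h3 h4 _ fun j => ?_
  have h4n := InLattice_neg h4
  rw [Cn_pos hM' h0 hτ hμ h2 h4n, Cn_neg hM' h0 hτ hμ h2 h4n, Cn_pos hM' h0 hτ hμ h1 h3,
    Cn_neg hM' h0 hτ hμ h1 h3, ← Finset.sum_add_distrib, ← Finset.sum_add_distrib,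
    ← Finset.sum_sub_distrib]
  refine Finset.sum_congr rfl fun k _ => ?_
  have eb : z2 - -(z1 - z2 - z3) = z1 - z3 := by ring
  rw [eb]
  have x1 : ∀ a : ℂ, Complex.exp (Real.pi * Complex.I * (2 * (m : ℂ) * ((j : ℂ) + 1) - (k : ℂ)) * a)
      = e2 ((2 * (m : ℂ) * ((j : ℂ) + 1) - (k : ℂ)) * a / 2) := fun a => by
    rw [e2]; congr 1; ring
  have x2 : ∀ a : ℂ, Complex.exp (-(Real.pi * Complex.I) * (2 * (m : ℂ) * ((j : ℂ) + 1) - (k : ℂ)) * a)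
      = e2 (-((2 * (m : ℂ) * ((j : ℂ) + 1) - (k : ℂ)) * a / 2)) := fun a => by
    rw [e2]; congr 1; ring
  generalize jTheta (k : ℂ) (m : ℂ) τ (z1 - z3) - jTheta (-(k : ℂ)) (m : ℂ) τ (z1 - z3) = Q
  rw [x1, x1, x2, x2, qpow_e2, qpow_e2]
  push_cast
  have y1 : ∀ c d : ℂ, e2 (τ * (((m : ℂ) + 1) * ((j : ℂ) + 1) ^ 2)) *
      e2 (τ * (-((k : ℂ) ^ 2) / (4 * (m : ℂ)))) * (e2 c * e2 d) =
      e2 (τ * ((m : ℂ) + 1) * ((j : ℂ) + 1) ^ 2 + c + d - τ * ((k : ℂ) ^ 2 / (4 * (m : ℂ)))) :=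
    fun c d => by
    rw [← e2_add, ← e2_add, ← e2_add]; congr 1; ring
  rw [mul_sub, mul_sub, mul_add, y1, y1, y1, y1, ← add_mul, ← add_mul, ← sub_mul]
  congr 1
  have z : ∀ a b c d a' b' c' d' : ℂ, a = b' → b = a' → c = c' → d = d' →
      a + b - c - d = a' + b' - (c' + d') := by
    rintro a b c d _ _ _ _ rfl rfl rfl rfl
    ring
  apply z <;> (apply congrArg; ring)

end Wakimoto
end
end
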